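/- arXiv:1806.03485 — 3 statements merged into one kernel-verified Lean document; each statement's English description precedes it below -/
import Mathlib

section
/- Let 1 ≤ p < ∞ and -1 < α < ∞. Every linear subspace M of the weighted Bergman space A^p_α(𝔻) with M ≠ {0}, which is closed in the A^p_α norm and invariant under the shift operator (i.e., z·M ⊆ M), contains a function that belongs to A^p_α(𝔻) but not to the Hardy space H^p(𝔻); that is, M ∩ (A^p_α(𝔻) \ H^p(𝔻)) is nonempty. -/
/-!
Let `f ∈ M` be nonzero. Multiplying by `z ^ n` sends the Bergman norm of `f` to zero as `n → ∞`,
but hardly changes its integral means near the unit circle. A gliding hump exploits this: for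
exponents `n k` growing fast enough, put `φ z = ∑ 4 ^ k z ^ (n k)` and `g = φ f`.

* `exists_exponents` chooses the `n k` together with radii `r k = radius (n k)`, so that
  `8 ^ k z ^ (n k) f` has tiny Bergman norm and so that, on `|z| = r k`, the `k`-th term of `φ` is
  comparable to `4 ^ k` while the later terms are negligible.
* `exists_majorant` bounds `(∑ |4 ^ k z ^ (n k)|) ^ p |f| ^ p (1 - |z|²) ^ α` by an integrable
  function. By dominated convergence `g` lies in the Bergman space and is the norm limit of
  (partial sum of `φ`) times `f`; these products belong to `M` by shift invariance, and `M` is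
  closed, so `g ∈ M`.
* `multiplier_lower` gives `|φ| ≥ (5/12) 4 ^ k - 2` on `|z| = r k`, and `hardyIntegral_lower`
  bounds the integral means of `f` below by a positive constant near the boundary. Hence the
  integral means of `g` at the radii `r k` are unbounded, and `g` is not in the Hardy space.
-/

open MeasureTheory Filter Set Topology Real

noncomputable section

/-- The open unit disk in the complex plane. -/
def unitDisk : Set ℂ := Metric.ball 0 1

/-- The integrand `|f z|^p (1 - |z|^2)^α` appearing in the weighted Bergman norm. -/
def bergmanIntegrand (p α : ℝ) (f : ℂ → ℂ) (z : ℂ) : ℝ :=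
  ‖f z‖ ^ p * (1 - ‖z‖ ^ 2) ^ α

/-- Membership in the weighted Bergman space `A^p_α(𝔻)`. -/
def MemBergman (p α : ℝ) (f : ℂ → ℂ) : Prop :=
  DifferentiableOn ℂ f unitDisk ∧
    IntegrableOn (bergmanIntegrand p α f) unitDisk volume

/-- The weighted Bergman norm `‖f‖_{A^p_α}`. -/
def bergmanNorm (p α : ℝ) (f : ℂ → ℂ) : ℝ :=
  (((α + 1) / π) * ∫ z in unitDisk, bergmanIntegrand p α f z ∂volume) ^ (1 / p)

/-- The mean `(1/(2π)) ∫_0^{2π} |f(r e^{iθ})|^p dθ`. -/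
def hardyIntegral (p : ℝ) (f : ℂ → ℂ) (r : ℝ) : ℝ :=
  (1 / (2 * π)) * ∫ θ in (0:ℝ)..(2 * π), ‖f ((r : ℂ) * Complex.exp (θ * Complex.I))‖ ^ p

/-- Membership in the Hardy space `H^p(𝔻)`. -/
def MemHardy (p : ℝ) (f : ℂ → ℂ) : Prop :=
  DifferentiableOn ℂ f unitDisk ∧
    ∃ C : ℝ, ∀ r : ℝ, 0 ≤ r → r < 1 → hardyIntegral p f r ≤ C

/-- The Hardy norm `‖f‖_{H^p}`. -/
def hardyNorm (p : ℝ) (f : ℂ → ℂ) : ℝ :=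
  ⨆ r : Set.Ico (0:ℝ) 1, (hardyIntegral p f ↑r) ^ (1 / p)

/-- `f` has the radial limit `L` at the boundary point `e^{iθ}`. -/
def HasRadialLimit (f : ℂ → ℂ) (θ : ℝ) (L : ℂ) : Prop :=
  Tendsto (fun r : ℝ => f ((r : ℂ) * Complex.exp (θ * Complex.I))) (𝓝[<] (1:ℝ)) (𝓝 L)

/-- `φ` is an inner function: bounded analytic on the disk, with radial limits of
modulus one at almost every boundary point. -/
def IsInner (φ : ℂ → ℂ) : Prop :=
  DifferentiableOn ℂ φ unitDisk ∧ (∃ C : ℝ, ∀ z ∈ unitDisk, ‖φ z‖ ≤ C) ∧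
    ∀ᵐ θ ∂(volume.restrict (Set.Ico (0:ℝ) (2 * π))),
      ∃ L : ℂ, ‖L‖ = 1 ∧ HasRadialLimit φ θ L

/-- `g` belongs to `φ · H^p(𝔻)` (as a space of analytic functions on the disk). -/
def MemMulHardy (p : ℝ) (φ g : ℂ → ℂ) : Prop :=
  ∃ h : ℂ → ℂ, MemHardy p h ∧ Set.EqOn g (fun z => φ z * h z) unitDisk

/-- The lacunary series `f₀(z) = ∑_{k=1}^∞ z^{3^{k-1}}`. -/
def lacunary (z : ℂ) : ℂ := ∑' k : ℕ, z ^ (3 ^ k)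

/-! ### Radii and lacunary exponents -/

/-- The radius attached to an exponent `n`, close enough to `1` that `3 / 4 ≤ radius n ^ n`. -/
def radius (n : ℕ) : ℝ := 1 - 1 / (4 * ((n : ℝ) + 1))

lemma radius_lt_one (n : ℕ) : radius n < 1 := by
  unfold radius
  have : (0 : ℝ) < 1 / (4 * ((n : ℝ) + 1)) := by positivity
  linarith

lemma radius_ge (n : ℕ) : 3 / 4 ≤ radius n := by
  unfold radius
  have h : 1 / (4 * ((n : ℝ) + 1)) ≤ 1 / 4 := by
    apply one_div_le_one_div_of_le (by norm_num)
    have : (0 : ℝ) ≤ n := n.cast_nonneg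
    linarith
  linarith

lemma radius_mono : Monotone radius := by
  intro m n h
  unfold radius
  have : (m : ℝ) ≤ n := by exact_mod_cast h
  gcongr

lemma radius_pow_ge (n : ℕ) : 3 / 4 ≤ radius n ^ n := by
  have hpos : (0 : ℝ) < (n : ℝ) + 1 := by positivity
  have h := one_add_mul_sub_le_pow (a := radius n) (by linarith [radius_ge n]) n
  refine le_trans ?_ h
  unfold radius
  have h2 : (n : ℝ) * (1 / (4 * ((n : ℝ) + 1))) ≤ 1 / 4 := by
    rw [mul_one_div, div_le_div_iff₀ (by positivity) (by norm_num)]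
    linarith
  linarith

lemma tendsto_radius : Tendsto radius atTop (𝓝 1) := by
  have h : Tendsto (fun n : ℕ => 1 - (1 / 4 : ℝ) * (1 / ((n : ℝ) + 1))) atTop
      (𝓝 (1 - (1 / 4 : ℝ) * 0)) :=
    (tendsto_one_div_add_atTop_nhds_zero_nat.const_mul _).const_sub _
  simp only [mul_zero, sub_zero] at h
  refine h.congr fun n => ?_
  unfold radius
  have hpos : (n : ℝ) + 1 ≠ 0 := by positivity
  field_simp

/-- Multiplication by high powers of `z` makes the weighted norm small. -/
lemma tendsto_integral_pow (p : ℝ) (hp : 0 < p) (w : ℂ → ℝ)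
    (hw : IntegrableOn w unitDisk volume) :
    Tendsto (fun n : ℕ => ∫ z in unitDisk, (‖z‖ ^ n) ^ p * w z) atTop (𝓝 0) := by
  have hmeas : MeasurableSet unitDisk := Metric.isOpen_ball.measurableSet
  have key : Tendsto (fun n : ℕ => ∫ z in unitDisk, (‖z‖ ^ n) ^ p * w z) atTop
      (𝓝 (∫ _z in unitDisk, (0 : ℝ))) := by
    refine tendsto_integral_of_dominated_convergence (fun z => ‖w z‖) ?_ hw.norm ?_ ?_
    · intro n
      refine AEStronglyMeasurable.mul ?_ hw.aestronglyMeasurable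
      exact (by fun_prop : Measurable fun z : ℂ => (‖z‖ ^ n) ^ p).aestronglyMeasurable
    · intro n
      filter_upwards [ae_restrict_mem hmeas] with z hz
      have hz1 : ‖z‖ < 1 := by simpa [unitDisk] using hz
      rw [norm_mul, Real.norm_of_nonneg (by positivity)]
      refine mul_le_of_le_one_left (norm_nonneg _) ?_
      exact Real.rpow_le_one (by positivity) (pow_le_one₀ (norm_nonneg _) hz1.le) hp.le
    · filter_upwards [ae_restrict_mem hmeas] with z hz
      have hz1 : ‖z‖ < 1 := by simpa [unitDisk] using hz
      have h0 := (tendsto_pow_atTop_nhds_zero_of_lt_one (norm_nonneg z) hz1).rpow_const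
        (p := p) (Or.inr hp.le)
      rw [Real.zero_rpow hp.ne'] at h0
      simpa using h0.mul_const (w z)
  simpa using key

/-- The lacunary exponents: `n k` grows so fast that `8 ^ k z ^ (n k)` is tiny in the weighted
norm and that `4 ^ k z ^ (n k)` is tiny on the circles attached to all earlier exponents. -/
lemma exists_exponents (p : ℝ) (hp : 0 < p) (w : ℂ → ℝ)
    (hw : IntegrableOn w unitDisk volume) :
    ∃ n : ℕ → ℕ, StrictMono n ∧
      (∀ k, ∫ z in unitDisk, ((8 : ℝ) ^ k * ‖z‖ ^ n k) ^ p * w z ≤ (1 / 2) ^ k) ∧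
      ∀ j k, j < k → (4 : ℝ) ^ k * radius (n j) ^ n k ≤ (1 / 2) ^ k := by
  have step : ∀ k m : ℕ, ∃ N : ℕ, m < N ∧
      ∫ z in unitDisk, ((8 : ℝ) ^ k * ‖z‖ ^ N) ^ p * w z ≤ (1 / 2) ^ k ∧
      (4 : ℝ) ^ k * radius m ^ N ≤ (1 / 2) ^ k := by
    intro k m
    have h1 := (tendsto_integral_pow p hp w hw).const_mul (((8 : ℝ) ^ k) ^ p)
    have h2 := (tendsto_pow_atTop_nhds_zero_of_lt_one
      (by linarith [radius_ge m] : 0 ≤ radius m) (radius_lt_one m)).const_mul ((4 : ℝ) ^ k)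
    rw [mul_zero] at h1 h2
    have hpos : (0 : ℝ) < (1 / 2) ^ k := by positivity
    obtain ⟨N, hN1, hN2, hN3⟩ := ((h1.eventually_le_const hpos).and
      ((h2.eventually_le_const hpos).and (eventually_gt_atTop m))).exists
    refine ⟨N, hN3, ?_, hN2⟩
    rw [← integral_const_mul] at hN1
    refine le_of_eq_of_le ?_ hN1
    congr 1
    ext z
    rw [Real.mul_rpow (by positivity) (by positivity), mul_assoc]
  choose N hN1 hN2 hN3 using step
  let n : ℕ → ℕ := fun k => Nat.rec (N 0 0) (fun k m => N (k + 1) m) k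
  have hn : ∀ k, n (k + 1) = N (k + 1) (n k) := fun k => rfl
  have hmono : StrictMono n := strictMono_nat_of_lt_succ fun k => by
    rw [hn]; exact hN1 _ _
  refine ⟨n, hmono, ?_, ?_⟩
  · intro k
    cases k with
    | zero => exact hN2 0 0
    | succ k => rw [hn]; exact hN2 _ _
  · intro j k hjk
    cases k with
    | zero => omega
    | succ k =>
      have h := hN3 (k + 1) (n k)
      rw [← hn] at h
      refine le_trans ?_ h
      gcongr
      · linarith [radius_ge (n j)]
      · exact radius_mono (hmono.monotone (by omega))

/-! ### The lacunary multiplier -/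

/-- The lacunary multiplier `∑ 4 ^ k z ^ (n k)`. -/
def multiplier (n : ℕ → ℕ) (z : ℂ) : ℂ := ∑' k : ℕ, (4 : ℂ) ^ k * z ^ n k

lemma norm_term (n : ℕ → ℕ) (k : ℕ) (z : ℂ) :
    ‖(4 : ℂ) ^ k * z ^ n k‖ = (4 : ℝ) ^ k * ‖z‖ ^ n k := by
  simp

lemma term_le {n : ℕ → ℕ}
    (hr : ∀ j k, j < k → (4 : ℝ) ^ k * radius (n j) ^ n k ≤ (1 / 2) ^ k)
    (j k : ℕ) (z : ℂ) (hz : ‖z‖ ≤ radius (n j)) :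
    ‖(4 : ℂ) ^ k * z ^ n k‖ ≤ 8 ^ j * (1 / 2) ^ k := by
  rw [norm_term]
  have h8 : (1 : ℝ) ≤ 8 ^ j := one_le_pow₀ (by norm_num)
  rcases lt_or_ge j k with h | h
  · calc (4 : ℝ) ^ k * ‖z‖ ^ n k ≤ 4 ^ k * radius (n j) ^ n k := by gcongr
      _ ≤ (1 / 2) ^ k := hr j k h
      _ ≤ 8 ^ j * (1 / 2) ^ k := le_mul_of_one_le_left (by positivity) h8
  · have hz1 : ‖z‖ ≤ 1 := hz.trans (radius_lt_one _).le
    calc (4 : ℝ) ^ k * ‖z‖ ^ n k ≤ 4 ^ k * 1 := by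
          gcongr; exact pow_le_one₀ (norm_nonneg _) hz1
      _ = 8 ^ k * (1 / 2) ^ k := by rw [← mul_pow]; norm_num
      _ ≤ 8 ^ j * (1 / 2) ^ k := by gcongr; norm_num

lemma summable_bound (j : ℕ) : Summable fun k : ℕ => (8 : ℝ) ^ j * (1 / 2) ^ k :=
  summable_geometric_two.mul_left _

lemma exists_radius_gt {n : ℕ → ℕ} (hn : StrictMono n) (z : ℂ) (hz : z ∈ unitDisk) :
    ∃ j, ‖z‖ < radius (n j) := by
  have hz1 : ‖z‖ < 1 := by simpa [unitDisk] using hz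
  exact ((tendsto_radius.comp hn.tendsto_atTop).eventually_const_lt hz1).exists

lemma summable_norm_term {n : ℕ → ℕ} (hn : StrictMono n)
    (hr : ∀ j k, j < k → (4 : ℝ) ^ k * radius (n j) ^ n k ≤ (1 / 2) ^ k)
    (z : ℂ) (hz : z ∈ unitDisk) :
    Summable fun k : ℕ => ‖(4 : ℂ) ^ k * z ^ n k‖ := by
  obtain ⟨j, hj⟩ := exists_radius_gt hn z hz
  exact (summable_bound j).of_nonneg_of_le (fun k => norm_nonneg _)
    fun k => term_le hr j k z hj.le

lemma differentiableOn_multiplier {n : ℕ → ℕ} (hn : StrictMono n)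
    (hr : ∀ j k, j < k → (4 : ℝ) ^ k * radius (n j) ^ n k ≤ (1 / 2) ^ k) :
    DifferentiableOn ℂ (multiplier n) unitDisk := by
  intro z hz
  obtain ⟨j, hj⟩ := exists_radius_gt hn z hz
  have h : DifferentiableOn ℂ (multiplier n) (Metric.ball 0 (radius (n j))) := by
    refine Complex.differentiableOn_tsum_of_summable_norm (summable_bound j) ?_
      Metric.isOpen_ball ?_
    · intro k; fun_prop
    · intro k w hw
      exact term_le hr j k w (by simpa using (mem_ball_zero_iff.mp hw).le)
  exact (h.differentiableAt (Metric.isOpen_ball.mem_nhds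
    (by simpa using hj))).differentiableWithinAt

/-- On the `k`-th circle the `k`-th term dominates the sum of all the others. -/
lemma multiplier_lower {n : ℕ → ℕ} (hn : StrictMono n)
    (hr : ∀ j k, j < k → (4 : ℝ) ^ k * radius (n j) ^ n k ≤ (1 / 2) ^ k)
    (k : ℕ) (z : ℂ) (hz : ‖z‖ = radius (n k)) :
    5 / 12 * (4 : ℝ) ^ k - 2 ≤ ‖multiplier n z‖ := by
  have hzD : z ∈ unitDisk := by
    simpa [unitDisk, hz] using radius_lt_one (n k)
  have hs := summable_norm_term hn hr z hzD
  have hsplit := hs.of_norm.sum_add_tsum_nat_add (k + 1)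
  rw [Finset.sum_range_succ] at hsplit
  have hz1 : ‖z‖ ≤ 1 := by rw [hz]; exact (radius_lt_one _).le
  have hA : ‖∑ i ∈ Finset.range k, (4 : ℂ) ^ i * z ^ n i‖ ≤ 4 ^ k / 3 := by
    calc ‖∑ i ∈ Finset.range k, (4 : ℂ) ^ i * z ^ n i‖
        ≤ ∑ i ∈ Finset.range k, (4 : ℝ) ^ i := by
          refine norm_sum_le_of_le _ fun i _ => ?_
          rw [norm_term]
          exact mul_le_of_le_one_right (by positivity) (pow_le_one₀ (norm_nonneg _) hz1)
      _ = (4 ^ k - 1) / (4 - 1) := geom_sum_eq (by norm_num) k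
      _ ≤ 4 ^ k / 3 := by
          have : (0 : ℝ) < 4 ^ k := by positivity
          linarith
  have hB : 3 / 4 * (4 : ℝ) ^ k ≤ ‖(4 : ℂ) ^ k * z ^ n k‖ := by
    rw [norm_term, hz, mul_comm]
    have := radius_pow_ge (n k)
    gcongr
  have hC : ‖∑' i, (4 : ℂ) ^ (i + (k + 1)) * z ^ n (i + (k + 1))‖ ≤ 2 := by
    refine tsum_of_norm_bounded hasSum_geometric_two fun i => ?_
    rw [norm_term, hz]
    refine (hr k (i + (k + 1)) (by omega)).trans ?_
    exact pow_le_pow_of_le_one (by norm_num) (by norm_num) (by omega)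
  have hE : (4 : ℂ) ^ k * z ^ n k = multiplier n z
      - ∑ i ∈ Finset.range k, (4 : ℂ) ^ i * z ^ n i
      - ∑' i, (4 : ℂ) ^ (i + (k + 1)) * z ^ n (i + (k + 1)) := by
    unfold multiplier
    rw [← hsplit]; ring
  have h1 := norm_sub_le (multiplier n z - ∑ i ∈ Finset.range k, (4 : ℂ) ^ i * z ^ n i)
    (∑' i, (4 : ℂ) ^ (i + (k + 1)) * z ^ n (i + (k + 1)))
  have h2 := norm_sub_le (multiplier n z) (∑ i ∈ Finset.range k, (4 : ℂ) ^ i * z ^ n i)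
  rw [← hE] at h1
  linarith

/-! ### An integrable majorant -/

/-- A weighted power-mean bound: `∑ 2⁻ᵏ aₖ ≤ 2 sup aₖ ≤ 2 (∑ aₖᵖ)^(1/p)`. -/
lemma ennreal_sum_rpow_le (p : ℝ) (hp : 0 < p) (a : ℕ → ENNReal) :
    (∑' k, (2⁻¹ : ENNReal) ^ k * a k) ^ p ≤ 2 ^ p * ∑' k, a k ^ p := by
  have h1 : ∀ k, a k ≤ (∑' j, a j ^ p) ^ p⁻¹ := fun k => by
    rw [ENNReal.le_rpow_inv_iff hp]
    exact ENNReal.le_tsum k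
  have h2 : ∑' k, (2⁻¹ : ENNReal) ^ k * a k ≤ 2 * (∑' j, a j ^ p) ^ p⁻¹ := by
    calc ∑' k, (2⁻¹ : ENNReal) ^ k * a k
        ≤ ∑' k, (2⁻¹ : ENNReal) ^ k * (∑' j, a j ^ p) ^ p⁻¹ :=
          ENNReal.tsum_le_tsum fun k => by gcongr; exact h1 k
      _ = 2 * (∑' j, a j ^ p) ^ p⁻¹ := by
          rw [ENNReal.tsum_mul_right, ENNReal.tsum_geometric, ENNReal.one_sub_inv_two, inv_inv]
  calc (∑' k, (2⁻¹ : ENNReal) ^ k * a k) ^ p ≤ (2 * (∑' j, a j ^ p) ^ p⁻¹) ^ p := by gcongr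
    _ = 2 ^ p * ∑' k, a k ^ p := by
      rw [ENNReal.mul_rpow_of_nonneg _ _ hp.le, ENNReal.rpow_inv_rpow hp.ne']

/-- An integrable majorant for the absolutely convergent multiplier series, raised to the power
`p` and weighted by `w`. -/
lemma exists_majorant (p : ℝ) (hp : 0 < p) (w : ℂ → ℝ)
    (hw : IntegrableOn w unitDisk volume) (hw0 : ∀ z ∈ unitDisk, 0 ≤ w z) {n : ℕ → ℕ}
    (hn : StrictMono n)
    (hI : ∀ k, ∫ z in unitDisk, ((8 : ℝ) ^ k * ‖z‖ ^ n k) ^ p * w z ≤ (1 / 2) ^ k)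
    (hr : ∀ j k, j < k → (4 : ℝ) ^ k * radius (n j) ^ n k ≤ (1 / 2) ^ k) :
    ∃ D : ℂ → ℝ, IntegrableOn D unitDisk volume ∧
      ∀ᵐ z ∂volume.restrict unitDisk,
        (∑' k, ‖(4 : ℂ) ^ k * z ^ n k‖) ^ p * w z ≤ D z := by
  have hmeas : MeasurableSet unitDisk := Metric.isOpen_ball.measurableSet
  let t : ℕ → ℂ → ℝ := fun k z => ((8 : ℝ) ^ k * ‖z‖ ^ n k) ^ p * w z
  let H : ℂ → ENNReal := fun z => 2 ^ p * ∑' k, ENNReal.ofReal (t k z)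
  have htm : ∀ k, AEStronglyMeasurable (t k) (volume.restrict unitDisk) := fun k =>
    (by fun_prop : Measurable fun z : ℂ => ((8 : ℝ) ^ k * ‖z‖ ^ n k) ^ p).aestronglyMeasurable.mul
      hw.aestronglyMeasurable
  have htae : ∀ k, AEMeasurable (fun z => ENNReal.ofReal (t k z)) (volume.restrict unitDisk) :=
    fun k => (htm k).aemeasurable.ennreal_ofReal
  have ht0 : ∀ k, 0 ≤ᵐ[volume.restrict unitDisk] t k := fun k => by
    filter_upwards [ae_restrict_mem hmeas] with z hz
    exact mul_nonneg (by positivity) (hw0 z hz)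
  have hti : ∀ k, Integrable (t k) (volume.restrict unitDisk) := fun k => by
    refine Integrable.mono' (hw.norm.const_mul (((8 : ℝ) ^ k) ^ p)) (htm k) ?_
    filter_upwards [ae_restrict_mem hmeas] with z hz
    have hz1 : ‖z‖ < 1 := by simpa [unitDisk] using hz
    rw [norm_mul, Real.norm_of_nonneg (by positivity)]
    gcongr
    exact mul_le_of_le_one_right (by positivity) (pow_le_one₀ (norm_nonneg _) hz1.le)
  have hHm : AEMeasurable H (volume.restrict unitDisk) :=
    (AEMeasurable.tsum htae).const_mul _
  have hHfin : ∫⁻ z in unitDisk, H z ≠ ⊤ := by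
    rw [lintegral_const_mul'' _ (AEMeasurable.tsum htae), lintegral_tsum htae]
    refine ENNReal.mul_ne_top (by simp) ?_
    refine ne_top_of_le_ne_top (b := ∑' k : ℕ, (2⁻¹ : ENNReal) ^ k) ?_ ?_
    · rw [ENNReal.tsum_geometric, ENNReal.one_sub_inv_two, inv_inv]; simp
    · refine ENNReal.tsum_le_tsum fun k => ?_
      rw [← ofReal_integral_eq_lintegral_ofReal (hti k) (ht0 k)]
      refine (ENNReal.ofReal_le_ofReal (hI k)).trans_eq ?_
      rw [ENNReal.ofReal_pow (by norm_num), one_div, ENNReal.ofReal_inv_of_pos (by norm_num)]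
      simp
  refine ⟨fun z => (H z).toReal, integrable_toReal_of_lintegral_ne_top hHm hHfin, ?_⟩
  filter_upwards [ae_restrict_mem hmeas, ae_lt_top' hHm hHfin] with z hz hfin
  have hs := summable_norm_term hn hr z hz
  rw [← ENNReal.ofReal_le_iff_le_toReal hfin.ne]
  have hS : ENNReal.ofReal (∑' k, ‖(4 : ℂ) ^ k * z ^ n k‖)
      = ∑' k, (2⁻¹ : ENNReal) ^ k * ENNReal.ofReal ((8 : ℝ) ^ k * ‖z‖ ^ n k) := by
    rw [ENNReal.ofReal_tsum_of_nonneg (fun _ => norm_nonneg _) hs]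
    refine tsum_congr fun k => ?_
    have : (2⁻¹ : ENNReal) ^ k = ENNReal.ofReal ((1 / 2) ^ k) := by
      rw [ENNReal.ofReal_pow (by norm_num), one_div, ENNReal.ofReal_inv_of_pos (by norm_num)]
      simp
    rw [this, ← ENNReal.ofReal_mul (by positivity), norm_term, ← mul_assoc, ← mul_pow]
    norm_num
  have hS0 : 0 ≤ ∑' k, ‖(4 : ℂ) ^ k * z ^ n k‖ := tsum_nonneg fun _ => norm_nonneg _
  rw [ENNReal.ofReal_mul (by positivity), ← ENNReal.ofReal_rpow_of_nonneg hS0 hp.le, hS]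
  calc _ ≤ (2 ^ p * ∑' k, ENNReal.ofReal ((8 : ℝ) ^ k * ‖z‖ ^ n k) ^ p) * ENNReal.ofReal (w z) := by
        gcongr
        exact ennreal_sum_rpow_le p hp _
    _ = H z := by
        simp only [H, t]
        rw [mul_assoc, ← ENNReal.tsum_mul_right]
        congr 2
        ext k
        rw [ENNReal.ofReal_rpow_of_nonneg (by positivity) hp.le, ← ENNReal.ofReal_mul (by positivity)]

/-! ### Lower bounds for integral means -/

lemma mem_unitDisk_circle {r : ℝ} (h0 : 0 ≤ r) (h1 : r < 1) (θ : ℝ) :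
    (r : ℂ) * Complex.exp (θ * Complex.I) ∈ unitDisk := by
  simp [unitDisk, Complex.norm_exp_ofReal_mul_I, abs_of_nonneg h0, h1]

lemma continuous_circle {f : ℂ → ℂ} (hf : DifferentiableOn ℂ f unitDisk) {r : ℝ}
    (h0 : 0 ≤ r) (h1 : r < 1) :
    Continuous fun θ : ℝ => ‖f ((r : ℂ) * Complex.exp (θ * Complex.I))‖ :=
  (hf.continuousOn.comp_continuous (by fun_prop) (mem_unitDisk_circle h0 h1)).norm

/-- The integral means of a nonzero analytic function stay away from zero near the boundary:
at radius `r` they are at least `(‖aₘ‖ rᵐ) ^ p`, where `aₘ` is any nonzero Taylor coefficient. -/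
lemma hardyIntegral_lower (p : ℝ) (hp : 1 ≤ p) {f : ℂ → ℂ}
    (hf : DifferentiableOn ℂ f unitDisk) (hne : ∃ z ∈ unitDisk, f z ≠ 0) :
    ∃ δ > 0, ∀ r : ℝ, 3 / 4 ≤ r → r < 1 → δ ≤ hardyIntegral p f r := by
  have hps : ∀ r : NNReal, 0 < r → r < 1 →
      HasFPowerSeriesOnBall f (cauchyPowerSeries f 0 r) 0 r := by
    intro r h0 h1
    refine DifferentiableOn.hasFPowerSeriesOnBall (hf.mono ?_) h0
    exact Metric.closedBall_subset_ball (by exact_mod_cast h1)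
  obtain ⟨z, hz, hfz⟩ := hne
  have hz1 : ‖z‖ < 1 := by simpa [unitDisk] using hz
  obtain ⟨s, hs, hs1⟩ := exists_between hz1
  have hs0 : 0 < s := (norm_nonneg z).trans_lt hs
  lift s to NNReal using hs0.le
  have hs0' : 0 < s := by exact_mod_cast hs0
  have hs1' : s < 1 := by exact_mod_cast hs1
  set q := cauchyPowerSeries f 0 s with hq
  have hqb := hps s hs0' hs1'
  obtain ⟨m, hm⟩ : ∃ m, q m ≠ 0 := by
    by_contra! hall
    apply hfz
    have h := hqb.hasSum (y := z) (by
      rw [Metric.mem_eball, edist_zero_right]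
      exact enorm_lt_coe.mpr (by exact_mod_cast hs))
    rw [zero_add] at h
    refine h.unique ?_
    simp [← hq, hall, hasSum_zero]
  have hmpos : 0 < ‖q m‖ := norm_pos_iff.mpr hm
  set t : ℝ := ‖q m‖ * (3 / 4) ^ m with ht
  have htpos : 0 < t := by positivity
  refine ⟨t ^ p, by positivity, fun r hr hr1 => ?_⟩
  have hr0 : 0 < r := by linarith
  have hmean : t ≤ (2 * π)⁻¹ * ∫ θ in (0 : ℝ)..2 * π,
      ‖f ((r : ℂ) * Complex.exp (θ * Complex.I))‖ := by
    lift r to NNReal using hr0.le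
    have heq : q = cauchyPowerSeries f 0 r :=
      hqb.hasFPowerSeriesAt.eq_formalMultilinearSeries
        (hps r (by exact_mod_cast hr0) (by exact_mod_cast hr1)).hasFPowerSeriesAt
    have h := norm_cauchyPowerSeries_le f 0 r m
    rw [← heq] at h
    simp only [circleMap_zero, abs_of_pos hr0] at h
    rw [inv_pow, ← div_eq_mul_inv, le_div_iff₀ (by positivity)] at h
    refine le_trans ?_ h
    rw [ht]
    gcongr
  set x : ℝ → ℝ := fun θ => ‖f ((r : ℂ) * Complex.exp (θ * Complex.I))‖ with hx
  have hxc : Continuous x := continuous_circle hf hr0.le hr1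
  -- Jensen's inequality, through the tangent line of `x ^ p` at `t`.
  have hpt : ∀ θ, t ^ p * (1 - p) + t ^ p * p / t * x θ ≤ x θ ^ p := by
    intro θ
    have hx0 : 0 ≤ x θ := norm_nonneg _
    have h := one_add_mul_self_le_rpow_one_add (s := x θ / t - 1)
      (by have := div_nonneg hx0 htpos.le; linarith) hp
    have h3 : (1 + (x θ / t - 1)) ^ p = x θ ^ p / t ^ p := by
      rw [add_sub_cancel, Real.div_rpow hx0 htpos.le]
    rw [h3, le_div_iff₀ (by positivity)] at h
    refine le_of_eq_of_le ?_ h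
    ring
  have hint := intervalIntegral.integral_mono_on (a := 0) (b := 2 * π) (by positivity)
    (μ := volume)
    ((by fun_prop : Continuous fun θ => t ^ p * (1 - p) + t ^ p * p / t * x θ).intervalIntegrable _ _)
    ((hxc.rpow_const fun _ => Or.inr (by linarith)).intervalIntegrable _ _)
    (fun θ _ => hpt θ)
  rw [intervalIntegral.integral_add (by simp) ((by fun_prop : Continuous fun θ =>
    t ^ p * p / t * x θ).intervalIntegrable _ _), intervalIntegral.integral_const,
    intervalIntegral.integral_const_mul, smul_eq_mul, sub_zero] at hint
  unfold hardyIntegral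
  rw [one_div]
  have hpi : (0 : ℝ) < 2 * π := by positivity
  calc t ^ p = t ^ p * (1 - p) + t ^ p * p / t * t := by field_simp; ring
    _ ≤ t ^ p * (1 - p) + t ^ p * p / t * ((2 * π)⁻¹ * ∫ θ in (0 : ℝ)..2 * π, x θ) := by gcongr
    _ = (2 * π)⁻¹ * (2 * π * (t ^ p * (1 - p)) + t ^ p * p / t * ∫ θ in (0 : ℝ)..2 * π, x θ) := by
        field_simp
    _ ≤ _ := by gcongr

/-- The integral means scale at least by the `p`-th power of a lower bound on the multiplier. -/
lemma hardyIntegral_mul_ge (p : ℝ) (hp : 1 ≤ p) {φ f : ℂ → ℂ}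
    (hφ : DifferentiableOn ℂ φ unitDisk) (hf : DifferentiableOn ℂ f unitDisk) {r c : ℝ}
    (h0 : 0 ≤ r) (h1 : r < 1) (hc : 0 ≤ c) (h : ∀ z : ℂ, ‖z‖ = r → c ≤ ‖φ z‖) :
    c ^ p * hardyIntegral p f r ≤ hardyIntegral p (fun z => φ z * f z) r := by
  unfold hardyIntegral
  rw [mul_left_comm, ← intervalIntegral.integral_const_mul]
  have hp0 : 0 ≤ p := by linarith
  gcongr
  refine intervalIntegral.integral_mono_on (by positivity) ?_ ?_ ?_
  · exact (((continuous_circle hf h0 h1).rpow_const fun _ => Or.inr hp0).const_mul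
      _).intervalIntegrable _ _
  · exact ((continuous_circle (hφ.mul hf) h0 h1).rpow_const
      fun _ => Or.inr hp0).intervalIntegrable _ _
  · intro θ _
    rw [norm_mul, Real.mul_rpow (norm_nonneg _) (norm_nonneg _)]
    gcongr
    exact h _ (by simp [Complex.norm_exp_ofReal_mul_I, abs_of_nonneg h0])

/-! ### The Bergman integrand of a product, and the conclusion -/

lemma bergmanIntegrand_mul (p α : ℝ) (φ f : ℂ → ℂ) (z : ℂ) :
    bergmanIntegrand p α (fun z => φ z * f z) z = ‖φ z‖ ^ p * bergmanIntegrand p α f z := by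
  unfold bergmanIntegrand
  rw [norm_mul, Real.mul_rpow (norm_nonneg _) (norm_nonneg _), mul_assoc]

lemma bergmanIntegrand_nonneg (p α : ℝ) (f : ℂ → ℂ) (z : ℂ) (hz : z ∈ unitDisk) :
    0 ≤ bergmanIntegrand p α f z := by
  have hz1 : ‖z‖ < 1 := by simpa [unitDisk] using hz
  have : ‖z‖ ^ 2 ≤ 1 := pow_le_one₀ (norm_nonneg _) hz1.le
  exact mul_nonneg (by positivity) (Real.rpow_nonneg (by linarith) _)

/-- **Theorem 2.** Any nonzero closed shift-invariant subspace of the Bergman space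
`A^p_α(𝔻)` contains a function lying in `A^p_α(𝔻) \ H^p(𝔻)`. -/
theorem bergman_invariant_subspace_contains_non_hardy
    (p α : ℝ) (hp : 1 ≤ p) (hα : -1 < α)
    (M : Set (ℂ → ℂ))
    (hMsub : ∀ f ∈ M, MemBergman p α f)
    (hM0 : (fun _ => (0:ℂ)) ∈ M)
    (hMadd : ∀ f ∈ M, ∀ g ∈ M, f + g ∈ M)
    (hMsmul : ∀ (c : ℂ), ∀ f ∈ M, c • f ∈ M)
    (hMne : ∃ f ∈ M, ∃ z ∈ unitDisk, f z ≠ 0)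
    (hMclosed : ∀ (F : ℕ → ℂ → ℂ) (g : ℂ → ℂ), (∀ n, F n ∈ M) → MemBergman p α g →
      Filter.Tendsto (fun n => bergmanNorm p α (F n - g)) Filter.atTop (nhds 0) → g ∈ M)
    (hMinv : ∀ f ∈ M, (fun z => z * f z) ∈ M) :
    ∃ f ∈ M, MemBergman p α f ∧ ¬ MemHardy p f := by
  have hp0 : 0 < p := by linarith
  obtain ⟨f, hfM, hne⟩ := hMne
  obtain ⟨hfd, hfi⟩ := hMsub f hfM
  have hmeas : MeasurableSet unitDisk := Metric.isOpen_ball.measurableSet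
  obtain ⟨n, hn, hI, hr⟩ := exists_exponents p hp0 (bergmanIntegrand p α f) hfi
  obtain ⟨D, hDi, hD⟩ := exists_majorant p hp0 (bergmanIntegrand p α f) hfi
    (bergmanIntegrand_nonneg p α f) hn hI hr
  have hφd := differentiableOn_multiplier hn hr
  set g : ℂ → ℂ := fun z => multiplier n z * f z with hg
  have hφm : AEMeasurable (multiplier n) (volume.restrict unitDisk) :=
    hφd.continuousOn.aemeasurable hmeas
  have hgB : MemBergman p α g := by
    refine ⟨hφd.mul hfd, ?_⟩
    refine Integrable.mono' hDi ?_ ?_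
    · simp only [hg, funext (bergmanIntegrand_mul p α (multiplier n) f)]
      exact ((hφm.norm.pow_const p).aestronglyMeasurable).mul hfi.aestronglyMeasurable
    · filter_upwards [hD, ae_restrict_mem hmeas] with z hz hzD
      have hw0 := bergmanIntegrand_nonneg p α f z hzD
      rw [Real.norm_of_nonneg (bergmanIntegrand_nonneg p α g z hzD), hg, bergmanIntegrand_mul]
      refine le_trans ?_ hz
      gcongr
      exact norm_tsum_le_tsum_norm (summable_norm_term hn hr z hzD)
  have hpow : ∀ m : ℕ, (fun z => z ^ m * f z) ∈ M := by
    intro m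
    induction m with
    | zero => simpa using hfM
    | succ m ih =>
      have h := hMinv _ ih
      convert h using 2 with z
      ring
  let T : ℕ → ℂ → ℂ := fun N z => ∑ k ∈ Finset.range N, (4 : ℂ) ^ k * z ^ n k
  have hT : ∀ N, (fun z => T N z * f z) ∈ M := by
    intro N
    induction N with
    | zero => simpa [T] using hM0
    | succ N ih =>
      convert hMadd _ ih _ (hMsmul ((4 : ℂ) ^ N) _ (hpow (n N))) using 1
      ext z
      simp only [T, Finset.sum_range_succ, Pi.add_apply, Pi.smul_apply, smul_eq_mul]
      ring
  have hsub : ∀ N, (fun z => T N z * f z) - g = fun z => (T N z - multiplier n z) * f z := by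
    intro N
    ext z
    simp only [hg, Pi.sub_apply]
    ring
  have hlim : Tendsto (fun N => ∫ z in unitDisk,
      bergmanIntegrand p α ((fun z => T N z * f z) - g) z) atTop (𝓝 0) := by
    have key : Tendsto (fun N => ∫ z in unitDisk,
        bergmanIntegrand p α ((fun z => T N z * f z) - g) z) atTop
        (𝓝 (∫ _z in unitDisk, (0 : ℝ))) := by
      refine tendsto_integral_of_dominated_convergence D ?_ hDi ?_ ?_
      · intro N
        rw [hsub, funext (bergmanIntegrand_mul p α (fun z => T N z - multiplier n z) f)]
        have hTm : Measurable (T N) := by fun_prop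
        exact (((hTm.aemeasurable.sub hφm).norm.pow_const p).aestronglyMeasurable).mul
          hfi.aestronglyMeasurable
      · intro N
        filter_upwards [hD, ae_restrict_mem hmeas] with z hz hzD
        have hw0 := bergmanIntegrand_nonneg p α f z hzD
        have hs := summable_norm_term hn hr z hzD
        rw [Real.norm_of_nonneg (bergmanIntegrand_nonneg p α _ z hzD), hsub, bergmanIntegrand_mul]
        refine le_trans ?_ hz
        gcongr
        have h1 : T N z - multiplier n z
            = -∑' k, (4 : ℂ) ^ (k + N) * z ^ n (k + N) := by
          simp only [T, multiplier]
          rw [← hs.of_norm.sum_add_tsum_nat_add N]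
          ring
        rw [h1, norm_neg]
        have hsN := (summable_nat_add_iff N).mpr hs
        refine (norm_tsum_le_tsum_norm hsN).trans ?_
        rw [← hs.sum_add_tsum_nat_add N]
        exact le_add_of_nonneg_left (Finset.sum_nonneg fun _ _ => norm_nonneg _)
      · filter_upwards [ae_restrict_mem hmeas] with z hzD
        have hs := (summable_norm_term hn hr z hzD).of_norm.hasSum.tendsto_sum_nat
        have h0 : Tendsto (fun N => ‖T N z - multiplier n z‖) atTop (𝓝 0) :=
          tendsto_iff_norm_sub_tendsto_zero.mp hs
        have h1 := (h0.rpow_const (p := p) (Or.inr hp0.le)).mul_const (bergmanIntegrand p α f z)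
        rw [Real.zero_rpow hp0.ne', zero_mul] at h1
        refine h1.congr fun N => ?_
        rw [hsub, bergmanIntegrand_mul]
    simpa using key
  have hgM : g ∈ M := by
    refine hMclosed (fun N z => T N z * f z) g hT hgB ?_
    have h := (hlim.const_mul ((α + 1) / π)).rpow_const (p := 1 / p) (Or.inr (by positivity))
    rw [mul_zero, Real.zero_rpow (by positivity)] at h
    exact h
  refine ⟨g, hgM, hgB, ?_⟩
  rintro ⟨-, C, hC⟩
  obtain ⟨δ, hδ, hlow⟩ := hardyIntegral_lower p hp hfd hne
  have hgrow : Tendsto (fun k : ℕ => 5 / 12 * (4 : ℝ) ^ k - 2) atTop atTop :=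
    tendsto_atTop_add_const_right _ _
      ((tendsto_pow_atTop_atTop_of_one_lt (by norm_num)).const_mul_atTop (by norm_num))
  obtain ⟨k, hk1, hk2⟩ := ((hgrow.eventually_ge_atTop 1).and
    (hgrow.eventually_gt_atTop (C / δ))).exists
  set c : ℝ := 5 / 12 * (4 : ℝ) ^ k - 2 with hc
  have hr0 : 0 ≤ radius (n k) := by linarith [radius_ge (n k)]
  have hr1 := radius_lt_one (n k)
  have h1 := hardyIntegral_mul_ge p hp hφd hfd hr0 hr1 (by linarith : 0 ≤ c)
    (multiplier_lower hn hr k)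
  have h2 := hC _ hr0 hr1
  have h3 := hlow _ (radius_ge (n k)) hr1
  rw [div_lt_iff₀ hδ] at hk2
  have h4 : c ≤ c ^ p := Real.self_le_rpow_of_one_le hk1 hp
  have h5 : c * δ ≤ c ^ p * hardyIntegral p f (radius (n k)) := by gcongr
  linarith
end
end

section
/- Let f₀(z) = Σ_{k=1}^{∞} z^{3^{k-1}} = z + z³ + z⁹ + z²⁷ + ⋯ for z in the open unit disk 𝔻. Then f₀ has a radial limit almost nowhere on the unit circle; that is, for almost every θ ∈ [0,2π), the limit lim_{r→1⁻} f₀(re^{iθ}) does not exist. -/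
/-!
The radial limit in fact exists at no boundary point. Write `a k = exp (i 3^k θ)`, so that
`lacunary (s * exp (i θ)) = ∑ a k * s ^ 3 ^ k` for `0 < s < 1`. If the radial limit `L` existed,
then evaluating at `s = r ^ 2, r ^ 3, r ^ 4` and combining with the weights `16, -32, 16`
would give `∑ a k * P (r ^ 3 ^ k) → (16 - 32 + 16) L = 0` as `r → 1⁻`, where
`P x = 16 x ^ 2 (1 - x) ^ 2`.

Choose `r = 2 ^ (-1 / 3 ^ n)`, so that `x k = r ^ 3 ^ k` satisfies `x n = 1 / 2` and
`x (k + 1) = (x k) ^ 3`. The `n`-th term has modulus `P (1 / 2) = 1`. The other `x k` avoid the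
interval `(1 / 8, 7 / 9)`, and off it `P x ≤ 14 / 9 * (x - x ^ 3)`; the right side telescopes
along `x k`, with total at most `14 / 9`, of which `7 / 12` comes from `k = n`. The remaining
terms thus add up to at most `35 / 36`, and the sum stays at distance at least `1 / 36` from `0`.
-/

open MeasureTheory Filter Set Topology Real

noncomputable section

lemma summable_pow_three_pow {z : ℂ} (hz : ‖z‖ < 1) : Summable fun k : ℕ => z ^ (3 ^ k) :=
  (summable_geometric_of_norm_lt_one hz).comp_injective
    (Nat.pow_right_injective (by norm_num))

/-- Off the interval `(1 / 8, 7 / 9)` the weight is dominated by a multiple of `x - x ^ 3`, which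
telescopes along `x, x ^ 3, x ^ 9, …`. -/
lemma weight_le {x : ℝ} (h0 : 0 ≤ x) (h1 : x ≤ 1) (h : x ≤ 1 / 8 ∨ 7 / 9 ≤ x) :
    16 * (x ^ 2 - 2 * x ^ 3 + x ^ 4) ≤ 14 / 9 * (x - x ^ 3) := by
  have h2 : 0 ≤ (x - 1 / 8) * (144 * x - 112) := by
    rcases h with h | h
    · exact mul_nonneg_of_nonpos_of_nonpos (by linarith) (by linarith)
    · exact mul_nonneg (by linarith) (by linarith)
  have h3 : 0 ≤ x * (1 - x) * ((x - 1 / 8) * (144 * x - 112)) :=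
    mul_nonneg (mul_nonneg h0 (by linarith)) h2
  nlinarith [h3]

/-- The iterated cubes `r ^ 3 ^ k` jump over the interval `(1 / 8, 7 / 9)` when passing through
`1 / 2` at `k = n`. -/
lemma iterate_off_interval {r : ℝ} {n : ℕ} (h0 : 0 < r) (h1 : r < 1)
    (hn : r ^ (3 ^ n) = 1 / 2) {k : ℕ} (hk : k ≠ n) :
    r ^ (3 ^ k) ≤ 1 / 8 ∨ 7 / 9 ≤ r ^ (3 ^ k) := by
  rcases lt_or_gt_of_ne hk with hk | hk
  · right
    by_contra! hlt
    have ha : (r ^ (3 ^ k)) ^ 3 < (7 / 9 : ℝ) ^ 3 :=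
      pow_lt_pow_left₀ hlt (by positivity) (by norm_num)
    have hb : r ^ (3 ^ n) ≤ r ^ (3 ^ (k + 1)) :=
      pow_le_pow_of_le_one h0.le h1.le (Nat.pow_le_pow_right (by norm_num) hk)
    rw [hn, pow_succ, pow_mul] at hb
    norm_num at ha
    linarith
  · left
    have hb : r ^ (3 ^ k) ≤ r ^ (3 ^ (n + 1)) :=
      pow_le_pow_of_le_one h0.le h1.le (Nat.pow_le_pow_right (by norm_num) hk)
    rw [pow_succ 3 n, pow_mul, hn] at hb
    norm_num at hb
    linarith

lemma hasSum_telescope {r : ℝ} (h0 : 0 < r) (h1 : r < 1) :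
    HasSum (fun k : ℕ => r ^ (3 ^ k) - (r ^ (3 ^ k)) ^ 3) r := by
  have hs : Summable fun k : ℕ => r ^ (3 ^ k) :=
    (summable_geometric_of_lt_one h0.le h1).comp_injective
      (Nat.pow_right_injective (by norm_num))
  have hs' := (hasSum_nat_add_iff' 1).2 hs.hasSum
  have hd := hs.hasSum.sub hs'
  simp only [Finset.sum_range_one, pow_zero, pow_one, sub_sub_cancel] at hd
  have hfun : (fun k : ℕ => r ^ (3 ^ k) - (r ^ (3 ^ k)) ^ 3)
      = fun k : ℕ => r ^ (3 ^ k) - r ^ (3 ^ (k + 1)) := by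
    ext k
    rw [pow_succ 3 k, pow_mul]
  rw [hfun]
  exact hd

/-- The second-order combination of values of the lacunary series at `r ^ 2, r ^ 3, r ^ 4` stays
away from `0` at the radii with `r ^ 3 ^ n = 1 / 2`. -/
lemma combination_lower_bound {r : ℝ} {n : ℕ} (h0 : 0 < r) (h1 : r < 1)
    (hn : r ^ (3 ^ n) = 1 / 2) {w : ℂ} (hw : ‖w‖ = 1) :
    1 / 36 ≤ ‖16 * (lacunary (((r ^ 2 : ℝ) : ℂ) * w) - 2 * lacunary (((r ^ 3 : ℝ) : ℂ) * w)
      + lacunary (((r ^ 4 : ℝ) : ℂ) * w))‖ := by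
  have hsum : ∀ m : ℕ, m ≠ 0 → HasSum (fun k : ℕ => w ^ (3 ^ k) * (((r ^ (3 ^ k)) ^ m : ℝ) : ℂ))
      (lacunary (((r ^ m : ℝ) : ℂ) * w)) := by
    intro m hm
    have hz : ‖((r ^ m : ℝ) : ℂ) * w‖ < 1 := by
      rw [norm_mul, hw, mul_one, Complex.norm_real, Real.norm_of_nonneg (by positivity)]
      exact pow_lt_one₀ h0.le h1 hm
    have hfun : (fun k : ℕ => w ^ (3 ^ k) * (((r ^ (3 ^ k)) ^ m : ℝ) : ℂ))
        = fun k : ℕ => (((r ^ m : ℝ) : ℂ) * w) ^ (3 ^ k) := by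
      ext k
      push_cast
      ring
    rw [hfun]
    exact (summable_pow_three_pow hz).hasSum
  set S := 16 * (lacunary (((r ^ 2 : ℝ) : ℂ) * w) - 2 * lacunary (((r ^ 3 : ℝ) : ℂ) * w)
      + lacunary (((r ^ 4 : ℝ) : ℂ) * w)) with hS
  have hcomb := (((hsum 2 (by norm_num)).sub ((hsum 3 (by norm_num)).mul_left 2)).add
    (hsum 4 (by norm_num))).mul_left 16
  rw [← hS] at hcomb
  -- removing the `n`-th term, whose modulus is `1`
  have hrest := hcomb.sub (hasSum_ite_eq n (w ^ (3 ^ n)))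
  have hbound := ((hasSum_telescope h0 h1).mul_left (14 / 9)).sub (hasSum_ite_eq n (7 / 12 : ℝ))
  have hle := tsum_of_norm_bounded hbound (f := fun k : ℕ =>
    16 * (w ^ (3 ^ k) * (((r ^ (3 ^ k)) ^ 2 : ℝ) : ℂ)
      - 2 * (w ^ (3 ^ k) * (((r ^ (3 ^ k)) ^ 3 : ℝ) : ℂ))
      + w ^ (3 ^ k) * (((r ^ (3 ^ k)) ^ 4 : ℝ) : ℂ)) - if k = n then w ^ (3 ^ n) else 0) ?_
  · rw [hrest.tsum_eq] at hle
    have htri := norm_sub_norm_le (w ^ (3 ^ n)) S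
    rw [norm_sub_rev, norm_pow, hw, one_pow] at htri
    linarith
  · intro k
    by_cases hk : k = n
    · subst hk
      simp only [if_true, hn]
      have hzero : 16 * (w ^ (3 ^ k) * (((1 / 2) ^ 2 : ℝ) : ℂ)
          - 2 * (w ^ (3 ^ k) * (((1 / 2) ^ 3 : ℝ) : ℂ))
          + w ^ (3 ^ k) * (((1 / 2) ^ 4 : ℝ) : ℂ)) - w ^ (3 ^ k) = 0 := by
        push_cast
        ring
      rw [hzero, norm_zero]
      norm_num
    · simp only [if_neg hk, sub_zero]
      have hx0 : 0 ≤ r ^ (3 ^ k) := by positivity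
      have hx1 : r ^ (3 ^ k) ≤ 1 := pow_le_one₀ h0.le h1.le
      have hweight := weight_le hx0 hx1 (iterate_off_interval h0 h1 hn hk)
      set x := r ^ (3 ^ k)
      have hfac : 16 * (w ^ (3 ^ k) * ((x ^ 2 : ℝ) : ℂ) - 2 * (w ^ (3 ^ k) * ((x ^ 3 : ℝ) : ℂ))
          + w ^ (3 ^ k) * ((x ^ 4 : ℝ) : ℂ))
          = w ^ (3 ^ k) * ((16 * (x ^ 2 - 2 * x ^ 3 + x ^ 4) : ℝ) : ℂ) := by
        push_cast
        ring
      have hpos : 0 ≤ 16 * (x ^ 2 - 2 * x ^ 3 + x ^ 4) := by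
        nlinarith [sq_nonneg (x * (1 - x))]
      rw [hfac, norm_mul, norm_pow, hw, one_pow, one_mul, Complex.norm_real,
        Real.norm_of_nonneg hpos]
      exact hweight

/-- Radii `2 ^ (-1 / 3 ^ n)` along which the `n`-th term of the series has modulus `1 / 2`. -/
lemma exists_radii : ∃ ρ : ℕ → ℝ, (∀ n, 0 < ρ n ∧ ρ n < 1 ∧ ρ n ^ (3 ^ n) = 1 / 2) ∧
    Tendsto ρ atTop (𝓝 1) := by
  refine ⟨fun n => (1 / 2 : ℝ) ^ ((1 / 3 : ℝ) ^ n), fun n => ⟨by positivity, ?_, ?_⟩, ?_⟩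
  · exact Real.rpow_lt_one (by norm_num) (by norm_num) (by positivity)
  · rw [← Real.rpow_natCast, ← Real.rpow_mul (by norm_num)]
    push_cast
    rw [← mul_pow]
    norm_num
  · have h : Tendsto (fun n : ℕ => (1 / 3 : ℝ) ^ n) atTop (𝓝 0) :=
      tendsto_pow_atTop_nhds_zero_of_lt_one (by norm_num) (by norm_num)
    simpa using tendsto_const_nhds.rpow h (Or.inl (by norm_num : (1 / 2 : ℝ) ≠ 0))

lemma not_hasRadialLimit_lacunary (θ : ℝ) (L : ℂ) : ¬ HasRadialLimit lacunary θ L := by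
  intro hL
  obtain ⟨ρ, hρ, hlim⟩ := exists_radii
  have hm : ∀ m : ℕ, m ≠ 0 → Tendsto
      (fun n => lacunary (((ρ n ^ m : ℝ) : ℂ) * Complex.exp (θ * Complex.I))) atTop (𝓝 L) := by
    intro m hm
    refine Tendsto.comp (g := fun r : ℝ => lacunary ((r : ℂ) * Complex.exp (θ * Complex.I)))
      (f := fun n => ρ n ^ m) hL (tendsto_nhdsWithin_iff.2 ⟨?_, ?_⟩)
    · simpa using hlim.pow m
    · exact Eventually.of_forall fun n => pow_lt_one₀ (hρ n).1.le (hρ n).2.1 hm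
  have hcomb := ((((hm 2 (by norm_num)).sub ((hm 3 (by norm_num)).const_mul 2)).add
    (hm 4 (by norm_num))).const_mul 16).norm
  have hge := ge_of_tendsto' hcomb fun n => combination_lower_bound (hρ n).1 (hρ n).2.1 (hρ n).2.2
    (Complex.norm_exp_ofReal_mul_I θ)
  rw [show (16 : ℂ) * (L - 2 * L + L) = 0 by ring, norm_zero] at hge
  norm_num at hge

/-- The lacunary series `f₀(z) = ∑_{k=1}^∞ z^{3^{k-1}}` has a radial limit almost
nowhere on the unit circle. -/
theorem lacunary_radial_limit_almost_nowhere :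
    ∀ᵐ θ ∂(volume.restrict (Set.Ico (0:ℝ) (2 * π))),
      ¬ ∃ L : ℂ, HasRadialLimit lacunary θ L :=
  Eventually.of_forall fun θ ⟨L, hL⟩ => not_hasRadialLimit_lacunary θ L hL
end
end

section
/- Let 1 ≤ p < ∞. If φ is an inner function, g belongs to the Hardy space H^p(𝔻), and f is an analytic function on the open unit disk 𝔻 such that φ(z)·f(z) = g(z) for all z ∈ 𝔻, then for almost every θ ∈ [0,2π) the radial limit lim_{r→1⁻} f(re^{iθ}) exists. -/
/-!
Since `φ` has radial limits of modulus one almost everywhere, the quotient `f = g / φ` has a radial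
limit wherever `φ` and `g` both do (with the limit of `φ` nonzero), so it suffices to prove Fatou's
theorem for `g`. As `p ≥ 1`, the bound `x ≤ 1 + x ^ p` places `g` in `H¹`.

The `H¹` case is reduced to `H²`. The Herglotz integrals of `|g(ρ e^{it})|` have uniformly bounded
Taylor coefficients; taking limits of these as `ρ → 1` along an ultrafilter produces an analytic `F`
with `|g| ≤ Re F` (`exists_analytic_majorant`). Then `g = g / (1 + F) * exp (log (1 + F))`, where
the first factor is bounded by one. Because `Im log (1 + F)` is bounded, the mean value property of
`(log (1 + F))²` shows that `log (1 + F)` has bounded `L²` means (`ae_hasRadialLimit_log`).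

For `h` in `H²`, a weak `L²` limit of the dilates `h (ρ ·)` is a boundary function `H` whose Poisson
integral is `h` (`exists_boundary_function`). At a Lebesgue point of `H` the Poisson integral
converges radially to `H θ`: the kernel is bounded by `2 δ / max(δ, c |t - θ|)²` with `δ = 1 - r`,
and a dyadic decomposition around `θ` concludes (`tendsto_integral_kernel_mul`,
`ae_hasRadialLimit_of_sq_bounded`).
-/

open MeasureTheory Filter Set Topology Real

noncomputable section

/-! ### Approximate identities at Lebesgue points -/

/-- Approximate identity estimate: if the averages of `u ≥ 0` over shrinking intervals around `θ`
tend to `0`, then integrating `u` against the Poisson-type kernel `δ / max(δ, c |t - θ|) ^ 2` gives `0` in the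
limit `δ → 0`. The kernel is dominated by a geometric combination of the indicators of the intervals
of radius `2 ^ k δ / c` around `θ`, so dominated convergence for series applies. -/
lemma tendsto_integral_kernel_mul (u : ℝ → ℝ) (hu0 : ∀ t, 0 ≤ u t) (hu : Integrable u) (θ : ℝ)
    (hleb : Tendsto (fun s => (∫ t in Metric.closedBall θ s, u t) / s) (𝓝[>] 0) (𝓝 0))
    {c : ℝ} (hc : 0 < c) :
    Tendsto (fun δ => ∫ t, δ / (max δ (c * |t - θ|)) ^ 2 * u t) (𝓝[>] 0) (𝓝 0) := by
  set N : ℝ → ℝ := fun s => ∫ t in Metric.closedBall θ s, u t with hN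
  have hN0 : ∀ s, 0 ≤ N s := fun s => setIntegral_nonneg measurableSet_closedBall fun t _ => hu0 t
  have hNle : ∀ s, N s ≤ ∫ t, u t := fun s =>
    setIntegral_le_integral hu (Eventually.of_forall hu0)
  obtain ⟨M, hM0, hM⟩ : ∃ M : ℝ, 0 ≤ M ∧ ∀ s, 0 < s → N s / s ≤ M := by
    have h1 : ∀ᶠ s in 𝓝[>] (0:ℝ), N s / s ≤ 1 :=
      hleb.eventually (Iic_mem_nhds (by norm_num : (0:ℝ) < 1))
    obtain ⟨s0, hs0, h1⟩ := mem_nhdsGT_iff_exists_Ioc_subset.1 h1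
    have hs0 : 0 < s0 := hs0
    refine ⟨max 1 ((∫ t, u t) / s0), by positivity, fun s hs => ?_⟩
    rcases le_or_gt s s0 with h | h
    · exact le_max_of_le_left (h1 ⟨hs, h⟩)
    · refine le_max_of_le_right ?_
      have := hNle s
      have : 0 ≤ ∫ t, u t := integral_nonneg hu0
      gcongr
  -- The dyadic majorant of the integral: its `k`-th term is a multiple of the average of `u` over the
  -- interval of radius `2 ^ k δ / c`.
  have hlim : Tendsto (fun δ : ℝ => ∑' k : ℕ, (4 / c * (1 / 2) ^ k) *
      (N (2 ^ k * δ / c) / (2 ^ k * δ / c))) (𝓝[>] 0) (𝓝 (∑' k : ℕ, (4 / c * (1 / 2) ^ k) * 0)) := by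
    refine tendsto_tsum_of_dominated_convergence (bound := fun k => (4 / c * (1 / 2) ^ k) * M)
      ((summable_geometric_two.mul_left _).mul_right _) (fun k => ?_) ?_
    · refine Tendsto.const_mul _ (hleb.comp ?_)
      refine tendsto_nhdsWithin_iff.2 ⟨?_, ?_⟩
      · have : Tendsto (fun δ : ℝ => 2 ^ k * δ / c) (𝓝 0) (𝓝 (2 ^ k * 0 / c)) :=
          Continuous.tendsto (by fun_prop) _
        simpa using this.mono_left nhdsWithin_le_nhds
      · filter_upwards [self_mem_nhdsWithin] with δ hδ
        have hδ : 0 < δ := hδ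
        exact mem_Ioi.2 (by positivity)
    · filter_upwards [self_mem_nhdsWithin] with δ hδ k
      have hδ : 0 < δ := hδ
      have := hN0 (2 ^ k * δ / c)
      rw [Real.norm_of_nonneg (by positivity)]
      gcongr
      exact hM _ (by positivity)
  simp only [mul_zero, tsum_zero] at hlim
  refine squeeze_zero' ?_ ?_ hlim
  · filter_upwards [self_mem_nhdsWithin] with δ hδ
    have hδ : 0 < δ := hδ
    refine integral_nonneg fun t => ?_
    have := hu0 t
    positivity
  · filter_upwards [self_mem_nhdsWithin] with δ hδ
    have hδ : 0 < δ := hδ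
    set G : ℕ → ℝ → ℝ := fun k t => (4 * (1 / 4) ^ k / δ) *
      (Metric.closedBall θ (2 ^ k * δ / c)).indicator u t with hG
    have hGint : ∀ k, Integrable (G k) := fun k =>
      (hu.indicator measurableSet_closedBall).const_mul _
    have hG0 : ∀ k t, 0 ≤ G k t := fun k t =>
      mul_nonneg (by positivity) (indicator_nonneg (fun x _ => hu0 x) t)
    have hGI : ∀ k, ∫ t, G k t = (4 / c * (1 / 2) ^ k) *
        (N (2 ^ k * δ / c) / (2 ^ k * δ / c)) := fun k => by
      simp only [hG]
      rw [integral_const_mul, integral_indicator measurableSet_closedBall]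
      have : ((1:ℝ) / 4) ^ k = (1 / 2) ^ k * (1 / 2) ^ k := by
        rw [← mul_pow]; norm_num
      rw [this, one_div, inv_pow]
      field_simp
      rfl
    have hGs : Summable fun k => ∫ t, ‖G k t‖ := by
      have : (fun k => ∫ t, ‖G k t‖) = fun k => (4 / c * (1 / 2) ^ k) *
        (N (2 ^ k * δ / c) / (2 ^ k * δ / c)) := by
        funext k
        rw [← hGI k]
        exact integral_congr_ae (Eventually.of_forall fun t => Real.norm_of_nonneg (hG0 k t))
      rw [this]
      refine Summable.of_nonneg_of_le (fun k => ?_) (fun k => ?_)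
        ((summable_geometric_two.mul_left (4 / c)).mul_right M)
      · have := hN0 (2 ^ k * δ / c)
        positivity
      · gcongr
        exact hM _ (by positivity)
    have hsum := hasSum_integral_of_summable_integral_norm hGint hGs
    simp only [hGI] at hsum
    rw [hsum.tsum_eq]
    have hgeo : Summable fun k : ℕ => 4 / δ * ((1:ℝ) / 4) ^ k :=
      (summable_geometric_of_lt_one (by norm_num) (by norm_num)).mul_left _
    have hGle : ∀ k t, G k t ≤ 4 / δ * (1 / 4) ^ k * u t := fun k t => by
      have h1 : (Metric.closedBall θ (2 ^ k * δ / c)).indicator u t ≤ u t :=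
        indicator_le_self' (fun x _ => hu0 x) t
      calc G k t ≤ (4 * (1 / 4) ^ k / δ) * u t := by simp only [hG]; gcongr
        _ = _ := by ring
    have hGps : ∀ t, Summable fun k => G k t := fun t =>
      Summable.of_nonneg_of_le (fun k => hG0 k t) (fun k => hGle k t) (hgeo.mul_right (u t))
    have hint : Integrable (fun t => ∑' k, G k t) := by
      refine (hu.const_mul (∑' k : ℕ, 4 / δ * (1 / 4) ^ k)).mono' ?_
        (Eventually.of_forall fun t => ?_)
      · exact aestronglyMeasurable_of_tendsto_ae atTop
          (fun n => (integrable_finsetSum (Finset.range n) fun k _ => hGint k).aestronglyMeasurable)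
          (Eventually.of_forall fun t => (hGps t).hasSum.tendsto_sum_nat)
      · rw [Real.norm_of_nonneg (tsum_nonneg fun k => hG0 k t), ← tsum_mul_right]
        exact (hGps t).tsum_le_tsum (fun k => hGle k t) (hgeo.mul_right (u t))
    refine integral_mono_of_nonneg (Eventually.of_forall fun t => ?_) hint
      (Eventually.of_forall fun t => ?_)
    · have := hu0 t
      simp only [Pi.zero_apply]
      positivity
    · simp only
      obtain ⟨k, hk, hk'⟩ : ∃ k : ℕ, c * |t - θ| ≤ 2 ^ k * δ ∧
          δ / (max δ (c * |t - θ|)) ^ 2 ≤ 4 * (1 / 4) ^ k / δ := by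
        have hex : ∃ k : ℕ, c * |t - θ| ≤ 2 ^ k * δ := by
          obtain ⟨k, hk⟩ := pow_unbounded_of_one_lt (c * |t - θ| / δ) (by norm_num : (1:ℝ) < 2)
          exact ⟨k, by rw [div_lt_iff₀ hδ] at hk; exact hk.le⟩
        classical
        -- Minimality of `k` gives the lower bound `2 ^ (k - 1) δ < c |t - θ|` when `k ≠ 0`.
        refine ⟨Nat.find hex, Nat.find_spec hex, ?_⟩
        rcases hk : Nat.find hex with _ | j
        · rw [pow_zero, div_le_div_iff₀ (by positivity) hδ]
          have : δ ≤ max δ (c * |t - θ|) := le_max_left _ _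
          nlinarith
        · have hj : 2 ^ j * δ < c * |t - θ| := not_le.1 (Nat.find_min hex (m := j) (by omega))
          have h2 : 2 ^ j * δ ≤ max δ (c * |t - θ|) := hj.le.trans (le_max_right _ _)
          calc δ / (max δ (c * |t - θ|)) ^ 2 ≤ δ / (2 ^ j * δ) ^ 2 := by gcongr
            _ = 4 * (1 / 4) ^ (j + 1) / δ := by
              have : ((1:ℝ) / 4) ^ j = (1 / 2) ^ j * (1 / 2) ^ j := by
                rw [← mul_pow]; norm_num
              rw [pow_succ _ j, this, one_div, inv_pow]
              field_simp
      have hmem : t ∈ Metric.closedBall θ (2 ^ k * δ / c) := by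
        rw [Metric.mem_closedBall, Real.dist_eq, le_div_iff₀ hc, mul_comm]
        exact hk
      calc δ / (max δ (c * |t - θ|)) ^ 2 * u t ≤ (4 * (1 / 4) ^ k / δ) * u t := by
            gcongr; exact hu0 t
        _ = G k t := by simp only [hG, indicator_of_mem hmem]
        _ ≤ ∑' k, G k t := (hGps t).le_tsum k fun j _ => hG0 j t

/-! ### Chord length on the circle -/

/-- Chord length is comparable to arc length on one full turn, away from the endpoint at which the
parametrization closes up. The constant is the minimum modulus of the difference quotient, extended
to `t = θ` by the derivative. -/
lemma exists_mul_abs_sub_le_norm_circleMap_sub {θ : ℝ} (hθ : θ ∈ Ioo (0:ℝ) (2 * π)) :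
    ∃ c : ℝ, 0 < c ∧ ∀ t ∈ Icc (0:ℝ) (2 * π),
      c * |t - θ| ≤ ‖circleMap 0 1 t - circleMap 0 1 θ‖ := by
  have hd : Differentiable ℝ (circleMap 0 1) := differentiable_circleMap 0 1
  have hcont : Continuous (dslope (circleMap 0 1) θ) := by
    refine continuous_iff_continuousAt.2 fun t => ?_
    rcases eq_or_ne t θ with rfl | h
    · exact continuousAt_dslope_same.2 (hd _)
    · exact (continuousAt_dslope_of_ne h).2 (hd t).continuousAt
  have hne : ∀ t ∈ Icc (0:ℝ) (2 * π), dslope (circleMap 0 1) θ t ≠ 0 := by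
    intro t ht
    rcases eq_or_ne t θ with rfl | h
    · rw [dslope_same, deriv_circleMap]
      simp
    · rw [dslope_of_ne _ h, slope_def_module]
      refine smul_ne_zero (inv_ne_zero (sub_ne_zero.2 h)) (sub_ne_zero.2 fun he => ?_)
      obtain ⟨n, hn⟩ := (circleMap_eq_circleMap_iff 0 one_ne_zero).1 he
      have hn' : t = θ + n * (2 * π) := by
        have := congrArg Complex.im hn
        simpa using this
      have h1 : (n:ℝ) < 1 := by nlinarith [ht.2, hθ.1, Real.pi_pos]
      have h2 : (-1:ℝ) < n := by nlinarith [ht.1, hθ.2, Real.pi_pos]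
      have h3 : n < 1 := by exact_mod_cast h1
      have h4 : -1 < n := by exact_mod_cast h2
      obtain rfl : n = 0 := by omega
      exact h (by simpa using hn')
  obtain ⟨t₀, ht₀, hmin⟩ := isCompact_Icc.exists_isMinOn (nonempty_Icc.2 (by positivity))
    hcont.norm.continuousOn (s := Icc (0:ℝ) (2 * π))
  refine ⟨‖dslope (circleMap 0 1) θ t₀‖, norm_pos_iff.2 (hne t₀ ht₀), fun t ht => ?_⟩
  rw [← sub_smul_dslope, norm_smul, mul_comm, Real.norm_eq_abs]
  gcongr
  exact hmin ht

/-! ### Dilates and boundary functions -/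

lemma smul_mem_unitDisk {ρ : ℝ} (h0 : 0 ≤ ρ) (h1 : ρ < 1) {z : ℂ} (hz : ‖z‖ ≤ 1) :
    (ρ : ℂ) * z ∈ unitDisk := by
  rw [unitDisk, mem_ball_zero_iff, norm_mul, Complex.norm_real, Real.norm_of_nonneg h0]
  nlinarith [norm_nonneg z]

lemma diffContOnCl_dilate {h : ℂ → ℂ} (hh : DifferentiableOn ℂ h unitDisk) {ρ : ℝ}
    (h0 : 0 ≤ ρ) (h1 : ρ < 1) : DiffContOnCl ℂ (fun z => h (ρ * z)) (Metric.ball 0 1) := by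
  refine DifferentiableOn.diffContOnCl ?_
  rw [closure_ball _ one_ne_zero]
  refine hh.comp (by fun_prop) fun z hz => smul_mem_unitDisk h0 h1 (by simpa using hz)

lemma continuous_dilate_circleMap {h : ℂ → ℂ} (hh : DifferentiableOn ℂ h unitDisk) {ρ : ℝ}
    (h0 : 0 ≤ ρ) (h1 : ρ < 1) : Continuous fun t : ℝ => h (ρ * circleMap 0 1 t) := by
  refine hh.continuousOn.comp_continuous (by fun_prop) fun t => smul_mem_unitDisk h0 h1 (by simp)

lemma tendsto_dilate {h : ℂ → ℂ} (hh : DifferentiableOn ℂ h unitDisk) {z : ℂ}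
    (hz : z ∈ unitDisk) : Tendsto (fun ρ : ℝ => h (ρ * z)) (𝓝[<] 1) (𝓝 (h z)) := by
  have h1 : ContinuousAt h z := (hh.differentiableAt (Metric.isOpen_ball.mem_nhds hz)).continuousAt
  have h2 : Tendsto (fun ρ : ℝ => (ρ : ℂ) * z) (𝓝[<] 1) (𝓝 z) := by
    have : Tendsto (fun ρ : ℝ => (ρ : ℂ) * z) (𝓝 1) (𝓝 (((1:ℝ) : ℂ) * z)) :=
      Continuous.tendsto (by fun_prop) _
    simpa using this.mono_left nhdsWithin_le_nhds
  exact h1.tendsto.comp h2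

lemma eventually_mem_Ico : ∀ᶠ ρ : ℝ in 𝓝[<] 1, 0 ≤ ρ ∧ ρ < 1 := by
  filter_upwards [Ioo_mem_nhdsLT (by norm_num : (0:ℝ) < 1)] with ρ hρ using ⟨hρ.1.le, hρ.2⟩

lemma continuous_poissonKernel_circleMap {z : ℂ} (hz : z ∈ unitDisk) :
    Continuous fun t : ℝ => poissonKernel 0 z (circleMap 0 1 t) := by
  simp only [poissonKernel_def, sub_zero]
  refine Continuous.div (by fun_prop) (by fun_prop) fun t => ?_
  have : circleMap 0 1 t ≠ z := circleMap_ne_mem_ball hz t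
  simpa [sub_eq_zero] using this

/-- The Poisson formula for the dilate `h (ρ ·)`, which is analytic across the unit circle. -/
lemma poisson_dilate {h : ℂ → ℂ} (hh : DifferentiableOn ℂ h unitDisk) {ρ : ℝ}
    (h0 : 0 ≤ ρ) (h1 : ρ < 1) {z : ℂ} (hz : z ∈ unitDisk) :
    h (ρ * z) = (2 * π)⁻¹ • ∫ t in Ioc (0:ℝ) (2 * π),
      (poissonKernel 0 z (circleMap 0 1 t)) • h (ρ * circleMap 0 1 t) := by
  rw [← intervalIntegral.integral_of_le (by positivity)]
  exact ((diffContOnCl_dilate hh h0 h1).circleAverage_poissonKernel_smul hz).symm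

/-- A function in `H²` is the Poisson integral of an `L²` function on the circle, namely of a weak
limit of its dilates. -/
lemma exists_boundary_function {h : ℂ → ℂ} (hh : DifferentiableOn ℂ h unitDisk) {C : ℝ}
    (hC : ∀ ρ : ℝ, 0 ≤ ρ → ρ < 1 → ∫ t in Ioc (0:ℝ) (2 * π), ‖h (ρ * circleMap 0 1 t)‖ ^ 2 ≤ C) :
    ∃ H : ℝ → ℂ, IntegrableOn H (Ioc (0:ℝ) (2 * π)) ∧ ∀ z ∈ unitDisk,
      h z = (2 * π)⁻¹ • ∫ t in Ioc (0:ℝ) (2 * π),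
        (poissonKernel 0 z (circleMap 0 1 t)) • H t := by
  set μ : Measure ℝ := volume.restrict (Ioc (0:ℝ) (2 * π)) with hμ
  have hmem : ∀ k : ℝ → ℂ, Continuous k → MemLp k 2 μ := fun k hk => by
    obtain ⟨B, hB⟩ := (isCompact_Icc (a := (0:ℝ)) (b := 2 * π)).exists_bound_of_continuousOn
      hk.continuousOn
    refine MemLp.of_bound hk.aestronglyMeasurable B ?_
    filter_upwards [ae_restrict_mem measurableSet_Ioc] with t ht using hB t ⟨ht.1.le, ht.2⟩
  classical
  set x : ℝ → Lp ℂ 2 μ := fun ρ =>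
    if hρ : 0 ≤ ρ ∧ ρ < 1 then (hmem _ (continuous_dilate_circleMap hh hρ.1 hρ.2)).toLp _ else 0
    with hx
  have hxn : ∀ ρ, ‖x ρ‖ ≤ √C := fun ρ => by
    by_cases hρ : 0 ≤ ρ ∧ ρ < 1
    · refine Real.le_sqrt_of_sq_le ((le_of_eq ?_).trans (hC ρ hρ.1 hρ.2))
      have h1 : ((‖x ρ‖ ^ 2 : ℝ) : ℂ) = inner ℂ (x ρ) (x ρ) := by
        rw [inner_self_eq_norm_sq_to_K]; simp
      have h2 : (inner ℂ (x ρ) (x ρ) : ℂ) =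
          ((∫ t, ‖h (ρ * circleMap 0 1 t)‖ ^ 2 ∂μ : ℝ) : ℂ) := by
        rw [L2.inner_def, ← integral_complex_ofReal]
        refine integral_congr_ae ?_
        simp only [hx, dif_pos hρ]
        filter_upwards [(hmem _ (continuous_dilate_circleMap hh hρ.1 hρ.2)).coeFn_toLp] with t ht
        rw [ht, inner_self_eq_norm_sq_to_K]; simp
      exact_mod_cast h1.trans h2
    · simp [hx, dif_neg hρ]
  -- Along an ultrafilter converging to `1` from the left, Banach–Alaoglu gives a weak limit without
  -- passing to subsequences.
  set U : Ultrafilter ℝ := Ultrafilter.of (𝓝[<] (1:ℝ)) with hU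
  have hUle : (U : Filter ℝ) ≤ 𝓝[<] 1 := Ultrafilter.of_le _
  obtain ⟨Λ, -, hΛ⟩ := (WeakDual.isCompact_closedBall (0 : StrongDual ℂ (Lp ℂ 2 μ)) (√C)
    ).ultrafilter_le_nhds (U.map fun ρ => StrongDual.toWeakDual (innerSL ℂ (x ρ))) (by
      rw [le_principal_iff, Ultrafilter.mem_coe, Ultrafilter.mem_map]
      refine Filter.univ_mem' fun ρ => ?_
      simpa using hxn ρ)
  set H : Lp ℂ 2 μ := (InnerProductSpace.toDual ℂ (Lp ℂ 2 μ)).symm (WeakDual.toStrongDual Λ)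
    with hH
  have hlim : ∀ k : Lp ℂ 2 μ, Tendsto (fun ρ => inner ℂ k (x ρ)) U (𝓝 (inner ℂ k H)) := fun k => by
    have h1 : Tendsto (fun ρ => inner ℂ (x ρ) k) U (𝓝 (Λ k)) :=
      ((WeakDual.eval_continuous k).tendsto Λ).comp hΛ
    have h2 : (Λ k : ℂ) = inner ℂ H k := by
      rw [hH, InnerProductSpace.toDual_symm_apply]; rfl
    rw [h2] at h1
    simpa [Function.comp_def, inner_conj_symm] using (Complex.continuous_conj.tendsto _).comp h1
  refine ⟨H, ?_, fun z hz => ?_⟩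
  · exact (Lp.memLp H).integrable (by norm_num)
  · have hKc : Continuous fun t : ℝ => ((poissonKernel 0 z (circleMap 0 1 t) : ℝ) : ℂ) :=
      Complex.continuous_ofReal.comp (continuous_poissonKernel_circleMap hz)
    set k : Lp ℂ 2 μ := (hmem _ hKc).toLp _ with hk
    have hkc := (hmem _ hKc).coeFn_toLp
    have e1 : ∀ y : Lp ℂ 2 μ, inner ℂ k y =
        ∫ t, (poissonKernel 0 z (circleMap 0 1 t)) • y t ∂μ := fun y => by
      rw [L2.inner_def]
      refine integral_congr_ae ?_
      filter_upwards [hkc] with t ht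
      rw [hk, ht]
      simp [mul_comm]
    have e2 : ∀ᶠ ρ in (U : Filter ℝ), (2 * π)⁻¹ • inner ℂ k (x ρ) = h (ρ * z) := by
      filter_upwards [hUle eventually_mem_Ico] with ρ hρ
      rw [e1, poisson_dilate hh hρ.1 hρ.2 hz]
      congr 1
      refine integral_congr_ae ?_
      simp only [hx, dif_pos hρ]
      filter_upwards [(hmem _ (continuous_dilate_circleMap hh hρ.1 hρ.2)).coeFn_toLp] with t ht
      rw [ht]
    have l1 := ((hlim k).const_smul ((2 * π)⁻¹ : ℝ)).congr' e2
    rw [e1] at l1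
    exact tendsto_nhds_unique ((tendsto_dilate hh hz).mono_left hUle) l1

/-! ### Radial limits of functions in H² -/

lemma poissonKernel_nonneg' {z : ℂ} (hz : z ∈ unitDisk) (t : ℝ) :
    0 ≤ poissonKernel 0 z (circleMap 0 1 t) := by
  have : ‖z‖ < 1 := by simpa [unitDisk] using hz
  have h2 : ‖z‖ ^ 2 ≤ 1 := pow_le_one₀ (norm_nonneg _) this.le
  simp only [poissonKernel_def, sub_zero, norm_circleMap_zero, abs_one, one_pow]
  exact div_nonneg (by linarith) (by positivity)

/-- The Poisson kernel at `r e^{iθ}` is bounded by the kernel of `tendsto_integral_kernel_mul` with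
`δ = 1 - r`, because `|e^{it} - r e^{iθ}|` is at least both `1 - r` and half of
`|e^{it} - e^{iθ}|`. -/
lemma poissonKernel_le {θ c r t : ℝ} (hr0 : 0 ≤ r) (hr1 : r < 1)
    (hc : c * |t - θ| ≤ ‖circleMap 0 1 t - circleMap 0 1 θ‖) :
    poissonKernel 0 (r * circleMap 0 1 θ) (circleMap 0 1 t) ≤
      2 * ((1 - r) / (max (1 - r) (c / 2 * |t - θ|)) ^ 2) := by
  set w := circleMap 0 1 t with hw
  set e := circleMap 0 1 θ with he
  have hwn : ‖w‖ = 1 := by simp [hw]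
  have hen : ‖e‖ = 1 := by simp [he]
  have hrn : ‖(r : ℂ) * e‖ = r := by simp [hen, abs_of_nonneg hr0]
  have h1 : 1 - r ≤ ‖w - r * e‖ := by
    have := norm_sub_norm_le w (r * e)
    rwa [hwn, hrn] at this
  have h2 : ‖w - e‖ ≤ ‖w - r * e‖ + (1 - r) := by
    have h3 : w - e = (w - r * e) + ((r - 1 : ℝ) : ℂ) * e := by push_cast; ring
    have h4 : ‖((r - 1 : ℝ) : ℂ) * e‖ = 1 - r := by
      rw [norm_mul, hen, Complex.norm_real, mul_one, Real.norm_eq_abs, abs_of_nonpos (by linarith)]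
      ring
    rw [h3]
    exact (norm_add_le _ _).trans (by rw [h4])
  have h5 : max (1 - r) (c / 2 * |t - θ|) ≤ ‖w - r * e‖ := max_le h1 (by linarith)
  have h6 : 0 < max (1 - r) (c / 2 * |t - θ|) := lt_max_of_lt_left (by linarith)
  rw [poissonKernel_def, sub_zero, sub_zero, hwn, hrn, ← mul_div_assoc]
  gcongr
  nlinarith

lemma integral_poissonKernel {z : ℂ} (hz : z ∈ unitDisk) (a : ℂ) :
    (2 * π)⁻¹ • ∫ t in Ioc (0:ℝ) (2 * π), (poissonKernel 0 z (circleMap 0 1 t)) • a = a :=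
  (poisson_dilate (h := fun _ => a) (differentiableOn_const _) le_rfl zero_lt_one hz).symm

/-- Fatou's theorem for `H²`: the radial limit exists at every Lebesgue point of the boundary
function. -/
lemma ae_hasRadialLimit_of_sq_bounded {h : ℂ → ℂ} (hh : DifferentiableOn ℂ h unitDisk) {C : ℝ}
    (hC : ∀ ρ : ℝ, 0 ≤ ρ → ρ < 1 → ∫ t in Ioc (0:ℝ) (2 * π), ‖h (ρ * circleMap 0 1 t)‖ ^ 2 ≤ C) :
    ∀ᵐ θ ∂(volume.restrict (Ico (0:ℝ) (2 * π))), ∃ L : ℂ, HasRadialLimit h θ L := by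
  -- `H` is extended by zero to apply Lebesgue differentiation on `ℝ`, and the endpoint `θ = 0` is
  -- discarded, as the chord estimate fails there.
  obtain ⟨H, hHint, hHrep⟩ := exists_boundary_function hh hC
  have hH'int : Integrable ((Ioc (0:ℝ) (2 * π)).indicator H) :=
    (integrable_indicator_iff measurableSet_Ioc).2 hHint
  set H' := (Ioc (0:ℝ) (2 * π)).indicator H with hH'
  rw [Ioo_ae_eq_Ico.symm |> Measure.restrict_congr_set]
  filter_upwards [ae_restrict_mem measurableSet_Ioo, ae_restrict_of_ae
    (IsUnifLocDoublingMeasure.ae_tendsto_average_norm_sub volume hH'int.locallyIntegrable 1)]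
    with θ hθ hleb
  obtain ⟨c, hc, hcle⟩ := exists_mul_abs_sub_le_norm_circleMap_sub hθ
  refine ⟨H' θ, ?_⟩
  set u : ℝ → ℝ := (Ioc (0:ℝ) (2 * π)).indicator fun t => ‖H t - H' θ‖ with hu
  have hu0 : ∀ t, 0 ≤ u t := indicator_nonneg fun t _ => norm_nonneg _
  have hconst : IntegrableOn (fun _ : ℝ => H' θ) (Ioc (0:ℝ) (2 * π)) :=
    integrableOn_const measure_Ioc_lt_top.ne
  have huint : Integrable u :=
    (integrable_indicator_iff measurableSet_Ioc).2 (hHint.sub hconst).norm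
  have hule : ∀ t, u t ≤ ‖H' t - H' θ‖ := fun t => by
    by_cases ht : t ∈ Ioc (0:ℝ) (2 * π)
    · simp [hu, hH', ht]
    · simp [hu, ht]
  have huleb : Tendsto (fun s => (∫ t in Metric.closedBall θ s, u t) / s) (𝓝[>] 0) (𝓝 0) := by
    have h1 := (hleb (fun _ : ℝ => θ) id tendsto_id (by
      filter_upwards [self_mem_nhdsWithin] with s hs
      have hs : 0 < s := hs
      simpa using hs.le)).const_mul 2
    rw [mul_zero] at h1
    refine squeeze_zero' ?_ ?_ h1
    · filter_upwards [self_mem_nhdsWithin] with s hs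
      have hs : 0 < s := hs
      exact div_nonneg (setIntegral_nonneg measurableSet_closedBall fun t _ => hu0 t) hs.le
    · filter_upwards [self_mem_nhdsWithin] with s hs
      have hs : 0 < s := hs
      rw [setAverage_eq, measureReal_def, id, Real.volume_closedBall,
        ENNReal.toReal_ofReal (by positivity), smul_eq_mul, div_eq_inv_mul, ← mul_assoc]
      have : 2 * (2 * s)⁻¹ = s⁻¹ := by field_simp
      rw [this]
      gcongr
      · exact huint.integrableOn
      · refine (hH'int.integrableOn.sub ?_).norm
        exact integrableOn_const (isCompact_closedBall θ s).measure_lt_top.ne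
      · exact measurableSet_closedBall.nullMeasurableSet
      · exact hule _
  have hker := (tendsto_integral_kernel_mul u hu0 huint θ huleb (half_pos hc)).const_mul
    ((2 * π)⁻¹ * 2)
  rw [mul_zero] at hker
  have hδ : Tendsto (fun r : ℝ => 1 - r) (𝓝[<] 1) (𝓝[>] 0) := by
    refine tendsto_nhdsWithin_iff.2 ⟨?_, ?_⟩
    · have : Tendsto (fun r : ℝ => 1 - r) (𝓝 1) (𝓝 (1 - 1)) := Continuous.tendsto (by fun_prop) _
      simpa using this.mono_left nhdsWithin_le_nhds
    · filter_upwards [self_mem_nhdsWithin] with r hr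
      have hr : r < 1 := hr
      simpa using hr
  rw [HasRadialLimit, tendsto_iff_norm_sub_tendsto_zero]
  refine squeeze_zero' (Eventually.of_forall fun r => norm_nonneg _) ?_ (hker.comp hδ)
  filter_upwards [eventually_mem_Ico] with r ⟨hr0, hr1⟩
  have hexp : Complex.exp (θ * Complex.I) = circleMap 0 1 θ := by simp [circleMap]
  rw [hexp]
  have hz : (r : ℂ) * circleMap 0 1 θ ∈ unitDisk := smul_mem_unitDisk hr0 hr1 (by simp)
  set z : ℂ := (r : ℂ) * circleMap 0 1 θ with hzdef
  set P : ℝ → ℝ := fun t => poissonKernel 0 z (circleMap 0 1 t) with hP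
  have hPc : Continuous P := continuous_poissonKernel_circleMap hz
  have hPsm : ∀ k : ℝ → ℂ, IntegrableOn k (Ioc (0:ℝ) (2 * π)) →
      IntegrableOn (fun t => P t • k t) (Ioc (0:ℝ) (2 * π)) := fun k hk => by
    obtain ⟨B, hB⟩ := (isCompact_Icc (a := (0:ℝ)) (b := 2 * π)).exists_bound_of_continuousOn
      hPc.continuousOn
    refine Integrable.bdd_smul hk B hPc.aestronglyMeasurable ?_
    filter_upwards [ae_restrict_mem measurableSet_Ioc] with t ht using hB t ⟨ht.1.le, ht.2⟩
  have hkint : Integrable fun t => (1 - r) / (max (1 - r) (c / 2 * |t - θ|)) ^ 2 * u t := by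
    have hpos : ∀ t, 0 < max (1 - r) (c / 2 * |t - θ|) := fun t =>
      lt_max_of_lt_left (by linarith)
    refine huint.bdd_mul (c := (1 - r) / (1 - r) ^ 2) ?_ (Eventually.of_forall fun t => ?_)
    · refine Continuous.aestronglyMeasurable ?_
      exact Continuous.div (by fun_prop) (by fun_prop) fun t => (pow_pos (hpos t) 2).ne'
    · have := hpos t
      have h1r : 0 < 1 - r := by linarith
      rw [Real.norm_of_nonneg (by positivity)]
      gcongr
      exact le_max_left _ _
  calc ‖h z - H' θ‖
      = ‖(2 * π)⁻¹ • ∫ t in Ioc (0:ℝ) (2 * π), P t • (H t - H' θ)‖ := by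
        rw [hHrep z hz]
        conv_lhs => rw [← integral_poissonKernel hz (H' θ)]
        rw [← smul_sub, ← integral_sub (hPsm _ hHint) (hPsm _ hconst)]
        simp only [smul_sub, hP]
    _ ≤ (2 * π)⁻¹ * ∫ t in Ioc (0:ℝ) (2 * π), ‖P t • (H t - H' θ)‖ := by
        rw [norm_smul, Real.norm_of_nonneg (by positivity)]
        gcongr
        exact norm_integral_le_integral_norm _
    _ ≤ (2 * π)⁻¹ * ∫ t in Ioc (0:ℝ) (2 * π),
          2 * ((1 - r) / (max (1 - r) (c / 2 * |t - θ|)) ^ 2 * u t) := by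
        refine mul_le_mul_of_nonneg_left ?_ (by positivity)
        refine setIntegral_mono_on (hPsm _ (hHint.sub hconst)).norm
          (hkint.const_mul 2).integrableOn measurableSet_Ioc fun t ht => ?_
        rw [norm_smul, Real.norm_of_nonneg (poissonKernel_nonneg' hz t), ← mul_assoc]
        have : u t = ‖H t - H' θ‖ := by simp only [hu, indicator_of_mem ht]
        rw [this]
        gcongr
        exact poissonKernel_le hr0 hr1 (hcle t ⟨ht.1.le, ht.2⟩)
    _ ≤ (2 * π)⁻¹ * ∫ t, 2 * ((1 - r) / (max (1 - r) (c / 2 * |t - θ|)) ^ 2 * u t) := by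
        refine mul_le_mul_of_nonneg_left ?_ (by positivity)
        refine setIntegral_le_integral (hkint.const_mul 2) (Eventually.of_forall fun t => ?_)
        have := hu0 t
        have h1r : 0 < 1 - r := by linarith
        simp only [Pi.zero_apply]
        positivity
    _ = _ := by
        rw [integral_const_mul, ← mul_assoc]
        rfl

/-! ### Herglotz integrals and analytic majorants -/

/-- Taylor coefficients at `0` of the kernel `(1 + q) / (1 - q) = 1 + 2 q + 2 q ^ 2 + ⋯`. -/
def herglotzCoeff (n : ℕ) : ℂ := 2 - if n = 0 then 1 else 0

lemma norm_herglotzCoeff_le (n : ℕ) : ‖herglotzCoeff n‖ ≤ 2 := by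
  unfold herglotzCoeff
  split_ifs <;> norm_num

lemma hasSum_herglotzCoeff {q : ℂ} (hq : ‖q‖ < 1) :
    HasSum (fun n => herglotzCoeff n * q ^ n) (2 * (1 - q)⁻¹ - 1) := by
  have h1 := (hasSum_geometric_of_norm_lt_one hq).mul_left 2
  have h2 : HasSum (fun n : ℕ => if n = 0 then (1:ℂ) else 0) 1 := hasSum_ite_eq 0 1
  have h3 : (fun n => herglotzCoeff n * q ^ n) =
      fun n => 2 * q ^ n - if n = 0 then (1:ℂ) else 0 := by
    funext n
    rcases n with _ | n <;> simp [herglotzCoeff]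
  rw [h3]
  exact h1.sub h2

/-- Taylor coefficients of the Herglotz integral of `v`. -/
def herglotzIntegralCoeff (v : ℝ → ℝ) (n : ℕ) : ℂ :=
  (2 * π)⁻¹ • ∫ t in Ioc (0:ℝ) (2 * π), herglotzCoeff n * ((circleMap 0 1 t)⁻¹) ^ n * v t

lemma norm_herglotzIntegralCoeff_le {v : ℝ → ℝ} (hv : Continuous v) (hv0 : ∀ t, 0 ≤ v t) (n : ℕ) :
    ‖herglotzIntegralCoeff v n‖ ≤ (2 * π)⁻¹ * (2 * ∫ t in Ioc (0:ℝ) (2 * π), v t) := by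
  rw [herglotzIntegralCoeff, norm_smul, Real.norm_of_nonneg (by positivity), ← integral_const_mul]
  refine mul_le_mul_of_nonneg_left ?_ (by positivity)
  refine norm_integral_le_of_norm_le ?_ (Eventually.of_forall fun t => ?_)
  · exact (hv.const_mul 2).integrableOn_Ioc
  · rw [norm_mul, norm_mul, norm_pow, norm_inv, norm_circleMap_zero, Complex.norm_real,
      Real.norm_of_nonneg (hv0 t)]
    have := hv0 t
    have := norm_herglotzCoeff_le n
    simp only [abs_one, inv_one, one_pow, mul_one]
    gcongr

/-- Power series expansion of the Herglotz integral
`(2π)⁻¹ ∫ (e^{it} + z) / (e^{it} - z) v(t) dt`. -/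
lemma hasSum_herglotzIntegral {v : ℝ → ℝ} (hv : Continuous v) (hv0 : ∀ t, 0 ≤ v t) {z : ℂ}
    (hz : z ∈ unitDisk) :
    HasSum (fun n => herglotzIntegralCoeff v n * z ^ n) ((2 * π)⁻¹ •
      ∫ t in Ioc (0:ℝ) (2 * π), herglotzRieszKernel 0 z (circleMap 0 1 t) * v t) := by
  have hz1 : ‖z‖ < 1 := by simpa [unitDisk] using hz
  have hw0 : ∀ t, circleMap 0 1 t ≠ 0 := fun t => circleMap_ne_center one_ne_zero
  set G : ℕ → ℝ → ℂ := fun n t => herglotzCoeff n * (z * (circleMap 0 1 t)⁻¹) ^ n * v t with hG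
  have hGc : ∀ n, Continuous (G n) := fun n => by
    have : Continuous fun t => (circleMap 0 1 t)⁻¹ :=
      (continuous_circleMap 0 1).inv₀ hw0
    have h2 : Continuous fun t => (v t : ℂ) := Complex.continuous_ofReal.comp hv
    simp only [hG]
    fun_prop
  have hGn : ∀ n t, ‖G n t‖ ≤ 2 * ‖z‖ ^ n * v t := fun n t => by
    simp only [hG]
    rw [norm_mul, norm_mul, norm_pow, norm_mul, norm_inv, norm_circleMap_zero, Complex.norm_real,
      Real.norm_of_nonneg (hv0 t)]
    have := hv0 t
    have := norm_herglotzCoeff_le n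
    simp only [abs_one, inv_one, mul_one]
    gcongr
  have hsum := hasSum_integral_of_summable_integral_norm
    (μ := volume.restrict (Ioc (0:ℝ) (2 * π))) (F := G) (fun n => (hGc n).integrableOn_Ioc) (by
      refine Summable.of_nonneg_of_le (fun n => integral_nonneg fun t => norm_nonneg _) (fun n => ?_)
        (((summable_geometric_of_lt_one (norm_nonneg z) hz1).mul_left 2).mul_right
          (∫ t in Ioc (0:ℝ) (2 * π), v t))
      rw [← integral_const_mul]
      exact integral_mono (hGc n).norm.integrableOn_Ioc (hv.const_mul _).integrableOn_Ioc (hGn n))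
  have e1 : ∀ t, ∑' n, G n t = herglotzRieszKernel 0 z (circleMap 0 1 t) * v t := fun t => by
    have hq : ‖z * (circleMap 0 1 t)⁻¹‖ < 1 := by simpa using hz1
    have := (hasSum_herglotzCoeff hq).mul_right (v t : ℂ)
    simp only [hG]
    rw [this.tsum_eq, herglotzRieszKernel_def, sub_zero, sub_zero]
    congr 1
    have h1 := hw0 t
    have h2 : circleMap 0 1 t - z ≠ 0 := sub_ne_zero.2 (circleMap_ne_mem_ball hz t)
    have h3 : 1 - z * (circleMap 0 1 t)⁻¹ = (circleMap 0 1 t - z) / circleMap 0 1 t := by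
      field_simp
    rw [h3]
    field_simp
    ring
  simp only [e1] at hsum
  suffices e2 : (fun n => herglotzIntegralCoeff v n * z ^ n) =
      fun n => ((2 * π)⁻¹ : ℝ) • ∫ t in Ioc (0:ℝ) (2 * π), G n t by
    rw [e2]
    exact hsum.const_smul ((2 * π)⁻¹ : ℝ)
  funext n
  rw [herglotzIntegralCoeff, smul_mul_assoc, ← integral_mul_const]
  congr 2
  funext t
  simp only [hG, mul_pow]
  ring

/-- The real part of the Herglotz integral of `|g(ρ e^{it})|` is its Poisson integral, which
dominates `|g(ρ z)|`. -/
lemma norm_dilate_le_re_herglotz {g : ℂ → ℂ} (hg : DifferentiableOn ℂ g unitDisk) {ρ : ℝ}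
    (h0 : 0 ≤ ρ) (h1 : ρ < 1) {z : ℂ} (hz : z ∈ unitDisk) :
    ‖g (ρ * z)‖ ≤ ((2 * π)⁻¹ • ∫ t in Ioc (0:ℝ) (2 * π),
      herglotzRieszKernel 0 z (circleMap 0 1 t) * (‖g (ρ * circleMap 0 1 t)‖ : ℝ)).re := by
  have hgc := continuous_dilate_circleMap hg h0 h1
  have hK : Continuous fun t => herglotzRieszKernel 0 z (circleMap 0 1 t) := by
    simp only [herglotzRieszKernel_def, sub_zero]
    exact Continuous.div (by fun_prop) (by fun_prop) fun t =>
      sub_ne_zero.2 (circleMap_ne_mem_ball hz t)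
  have hint : IntegrableOn (fun t => herglotzRieszKernel 0 z (circleMap 0 1 t) *
      (‖g (ρ * circleMap 0 1 t)‖ : ℝ)) (Ioc (0:ℝ) (2 * π)) :=
    (hK.mul (Complex.continuous_ofReal.comp hgc.norm)).integrableOn_Ioc
  rw [poisson_dilate hg h0 h1 hz, Complex.smul_re, norm_smul, Real.norm_of_nonneg (by positivity),
    smul_eq_mul]
  refine mul_le_mul_of_nonneg_left ?_ (by positivity)
  have hre := Complex.reCLM.integral_comp_comm hint
  simp only [Complex.reCLM_apply] at hre
  rw [← hre]
  refine (norm_integral_le_integral_norm _).trans (le_of_eq ?_)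
  refine integral_congr_ae (Eventually.of_forall fun t => ?_)
  simp only [norm_smul, Real.norm_of_nonneg (poissonKernel_nonneg' hz t), Complex.re_mul_ofReal]
  rw [poissonKernel_eq_re_herglotzRieszKernel]
  rfl

/-- The modulus of a function in `H¹` is dominated by the real part of an analytic function. The
Herglotz integrals of `|g(ρ e^{it})|` have uniformly bounded Taylor coefficients, and the majorant
is the power series whose coefficients are their limits as `ρ → 1` along an ultrafilter. -/
lemma exists_analytic_majorant {g : ℂ → ℂ} (hg : DifferentiableOn ℂ g unitDisk) {C : ℝ}
    (hC : ∀ ρ : ℝ, 0 ≤ ρ → ρ < 1 → ∫ t in Ioc (0:ℝ) (2 * π), ‖g (ρ * circleMap 0 1 t)‖ ≤ C) :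
    ∃ F : ℂ → ℂ, DifferentiableOn ℂ F unitDisk ∧ ∀ z ∈ unitDisk, ‖g z‖ ≤ (F z).re := by
  set a : ℝ → ℕ → ℂ := fun ρ => herglotzIntegralCoeff fun t => ‖g (ρ * circleMap 0 1 t)‖ with ha
  set B : ℝ := (2 * π)⁻¹ * (2 * C) with hB
  have hab : ∀ n, ∀ ρ, 0 ≤ ρ ∧ ρ < 1 → ‖a ρ n‖ ≤ B := fun n ρ hρ => by
    refine (norm_herglotzIntegralCoeff_le (continuous_dilate_circleMap hg hρ.1 hρ.2).norm
      (fun t => norm_nonneg _) n).trans ?_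
    have := hC ρ hρ.1 hρ.2
    simp only [hB]
    gcongr
  set U : Ultrafilter ℝ := Ultrafilter.of (𝓝[<] (1:ℝ)) with hU
  have hUle : (U : Filter ℝ) ≤ 𝓝[<] 1 := Ultrafilter.of_le _
  have hlim : ∀ n, ∃ α : ℂ, ‖α‖ ≤ B ∧ Tendsto (fun ρ => a ρ n) U (𝓝 α) := fun n => by
    obtain ⟨α, hα, hα'⟩ := (isCompact_closedBall (0:ℂ) B).ultrafilter_le_nhds
      (U.map fun ρ => a ρ n) (by
        rw [le_principal_iff, Ultrafilter.mem_coe, Ultrafilter.mem_map]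
        filter_upwards [hUle eventually_mem_Ico] with ρ hρ
        simpa using hab n ρ hρ)
    exact ⟨α, by simpa using hα, hα'⟩
  choose α hαB hα using hlim
  refine ⟨fun z => ∑' n, α n * z ^ n, fun z hz => ?_, fun z hz => ?_⟩
  · have hz1 : ‖z‖ < 1 := by simpa [unitDisk] using hz
    obtain ⟨r, hr, hr1⟩ := exists_between hz1
    have hr0 : 0 ≤ r := (norm_nonneg z).trans hr.le
    have hd : DifferentiableOn ℂ (fun z => ∑' n, α n * z ^ n) (Metric.ball 0 r) := by
      refine Complex.differentiableOn_tsum_of_summable_norm (u := fun n => B * r ^ n)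
        ((summable_geometric_of_lt_one hr0 hr1).mul_left B) (fun n => by fun_prop)
        Metric.isOpen_ball fun n w hw => ?_
      have hw : ‖w‖ < r := by simpa using hw
      have := (norm_nonneg _).trans (hαB n)
      rw [norm_mul, norm_pow]
      gcongr
      exact hαB n
    exact (hd.differentiableAt (Metric.isOpen_ball.mem_nhds (by simpa using hr)))
      |>.differentiableWithinAt
  · have hz1 : ‖z‖ < 1 := by simpa [unitDisk] using hz
    have hF : Tendsto (fun ρ => ∑' n, a ρ n * z ^ n) U (𝓝 (∑' n, α n * z ^ n)) := by
      refine tendsto_tsum_of_dominated_convergence (bound := fun n => B * ‖z‖ ^ n)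
        ((summable_geometric_of_lt_one (norm_nonneg z) hz1).mul_left B)
        (fun n => (hα n).mul_const _) ?_
      filter_upwards [hUle eventually_mem_Ico] with ρ hρ n
      rw [norm_mul, norm_pow]
      gcongr
      exact hab n ρ hρ
    refine le_of_tendsto_of_tendsto ((tendsto_dilate hg hz).mono_left hUle).norm
      ((Complex.continuous_re.tendsto _).comp hF) ?_
    filter_upwards [hUle eventually_mem_Ico] with ρ hρ
    have h1 := hasSum_herglotzIntegral (continuous_dilate_circleMap hg hρ.1 hρ.2).norm
      (fun t => norm_nonneg _) hz
    simp only [Function.comp_apply, ha]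
    rw [h1.tsum_eq]
    exact norm_dilate_le_re_herglotz hg hρ.1 hρ.2 hz

/-! ### Radial limits in H^p and division by an inner function -/

lemma hasRadialLimit_ae_of_bounded {h : ℂ → ℂ} (hh : DifferentiableOn ℂ h unitDisk) {B : ℝ}
    (hB : ∀ z ∈ unitDisk, ‖h z‖ ≤ B) :
    ∀ᵐ θ ∂(volume.restrict (Ico (0:ℝ) (2 * π))), ∃ L : ℂ, HasRadialLimit h θ L := by
  refine ae_hasRadialLimit_of_sq_bounded hh (C := ∫ t in Ioc (0:ℝ) (2 * π), B ^ 2)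
    fun ρ h0 h1 => ?_
  have hc := continuous_dilate_circleMap hh h0 h1
  refine integral_mono (hc.norm.pow 2).integrableOn_Ioc continuous_const.integrableOn_Ioc
    fun t => ?_
  have := hB _ (smul_mem_unitDisk h0 h1 (z := circleMap 0 1 t) (by simp))
  simp only
  gcongr

/-- If `Re F > 0` then `log F` belongs to `H²`: its imaginary part `b` is bounded, and
`|log F|² = 2 b² + Re (log F)²`, where the last term has constant circle means by the mean value
property. -/
lemma ae_hasRadialLimit_log {F : ℂ → ℂ} (hF : DifferentiableOn ℂ F unitDisk)
    (hF0 : ∀ z ∈ unitDisk, 0 < (F z).re) :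
    ∀ᵐ θ ∂(volume.restrict (Ico (0:ℝ) (2 * π))),
      ∃ L : ℂ, HasRadialLimit (fun z => Complex.log (F z)) θ L := by
  have hL : DifferentiableOn ℂ (fun z => Complex.log (F z)) unitDisk :=
    hF.clog fun z hz => Or.inl (hF0 z hz)
  set l : ℂ → ℂ := fun z => Complex.log (F z) with hl
  have him : ∀ z ∈ unitDisk, ‖l z‖ ^ 2 ≤ 2 * π ^ 2 + (l z ^ 2).re := fun z hz => by
    have h1 : |(l z).im| ≤ π := by
      simpa [hl, Complex.log_im] using Complex.abs_arg_le_pi (F z)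
    have h2 : (l z).im ^ 2 ≤ π ^ 2 := by
      rw [← sq_abs]; gcongr
    rw [← Complex.normSq_eq_norm_sq, Complex.normSq_apply, sq (l z), Complex.mul_re]
    nlinarith
  refine ae_hasRadialLimit_of_sq_bounded hL
    (C := ∫ t in Ioc (0:ℝ) (2 * π), (2 * π ^ 2 + (l 0 ^ 2).re)) fun ρ h0 h1 => ?_
  have hc := continuous_dilate_circleMap hL h0 h1
  have hc2 : Continuous fun t : ℝ => l (ρ * circleMap 0 1 t) ^ 2 := hc.pow 2
  have hcre : Continuous fun t : ℝ => (l (ρ * circleMap 0 1 t) ^ 2).re :=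
    Complex.continuous_re.comp hc2
  have hcn : Continuous fun t : ℝ => ‖l (ρ * circleMap 0 1 t)‖ ^ 2 := hc.norm.pow 2
  have hmv : ∫ t in Ioc (0:ℝ) (2 * π), (l (ρ * circleMap 0 1 t) ^ 2).re =
      ∫ t in Ioc (0:ℝ) (2 * π), (l 0 ^ 2).re := by
    have e := (diffContOnCl_dilate (hL.pow 2) h0 h1)
    rw [← abs_one (α := ℝ)] at e
    have e := e.circleAverage
    rw [circleAverage_def, intervalIntegral.integral_of_le (by positivity), mul_zero] at e
    have h3 := Complex.reCLM.integral_comp_comm (hc2.integrableOn_Ioc (a := 0) (b := 2 * π)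
      (μ := volume))
    simp only [Complex.reCLM_apply] at h3
    rw [h3]
    have h4 := congrArg Complex.re e
    rw [Complex.smul_re, smul_eq_mul, inv_mul_eq_iff_eq_mul₀ (by positivity)] at h4
    refine h4.trans ?_
    simp [hl, Real.pi_pos.le]
  have hcadd : Continuous fun t : ℝ => 2 * π ^ 2 + (l (ρ * circleMap 0 1 t) ^ 2).re :=
    continuous_const.add hcre
  calc ∫ t in Ioc (0:ℝ) (2 * π), ‖l (ρ * circleMap 0 1 t)‖ ^ 2
      ≤ ∫ t in Ioc (0:ℝ) (2 * π), (2 * π ^ 2 + (l (ρ * circleMap 0 1 t) ^ 2).re) :=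
        integral_mono hcn.integrableOn_Ioc hcadd.integrableOn_Ioc
          fun t => him _ (smul_mem_unitDisk h0 h1 (by simp))
    _ = ∫ t in Ioc (0:ℝ) (2 * π), (2 * π ^ 2 + (l 0 ^ 2).re) := by
        rw [integral_add continuous_const.integrableOn_Ioc
          hcre.integrableOn_Ioc, hmv,
          integral_add continuous_const.integrableOn_Ioc continuous_const.integrableOn_Ioc]

/-- Fatou's theorem for `H¹`. With `F` an analytic majorant, `g = g / (1 + F) * exp (log (1 + F))`,
where the first factor is bounded and `log (1 + F)` lies in `H²`. -/
lemma ae_hasRadialLimit_of_integral_norm_bounded {g : ℂ → ℂ} (hg : DifferentiableOn ℂ g unitDisk)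
    {C : ℝ}
    (hC : ∀ ρ : ℝ, 0 ≤ ρ → ρ < 1 → ∫ t in Ioc (0:ℝ) (2 * π), ‖g (ρ * circleMap 0 1 t)‖ ≤ C) :
    ∀ᵐ θ ∂(volume.restrict (Ico (0:ℝ) (2 * π))), ∃ L : ℂ, HasRadialLimit g θ L := by
  obtain ⟨F, hF, hFg⟩ := exists_analytic_majorant hg hC
  have hF1 : DifferentiableOn ℂ (fun z => 1 + F z) unitDisk := hF.const_add 1
  have hre : ∀ z ∈ unitDisk, 1 + ‖g z‖ ≤ (1 + F z).re := fun z hz => by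
    simpa using hFg z hz
  have hpos : ∀ z ∈ unitDisk, 0 < (1 + F z).re := fun z hz =>
    lt_of_lt_of_le (by positivity) (hre z hz)
  have hne : ∀ z ∈ unitDisk, 1 + F z ≠ 0 := fun z hz h => by
    have := hpos z hz
    simp [h] at this
  have hbd : ∀ z ∈ unitDisk, ‖g z / (1 + F z)‖ ≤ 1 := fun z hz => by
    rw [norm_div]
    refine div_le_one_of_le₀ ?_ (norm_nonneg _)
    linarith [hre z hz, Complex.re_le_norm (1 + F z)]
  filter_upwards [hasRadialLimit_ae_of_bounded (hg.div hF1 hne) hbd, ae_hasRadialLimit_log hF1 hpos]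
    with θ ⟨L₁, hL₁⟩ ⟨L₂, hL₂⟩
  refine ⟨L₁ * Complex.exp L₂, ?_⟩
  refine (hL₁.mul ((Complex.continuous_exp.tendsto _).comp hL₂)).congr' ?_
  filter_upwards [eventually_mem_Ico] with r ⟨h0, h1⟩
  have hz := smul_mem_unitDisk h0 h1 (z := Complex.exp (θ * Complex.I))
    (Complex.norm_exp_ofReal_mul_I θ).le
  simp only [Function.comp_apply]
  rw [Complex.exp_log (hne _ hz)]
  exact div_mul_cancel₀ _ (hne _ hz)

lemma MemHardy.exists_integral_norm_le {p : ℝ} (hp : 1 ≤ p) {g : ℂ → ℂ} (hg : MemHardy p g) :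
    ∃ C : ℝ, ∀ ρ : ℝ, 0 ≤ ρ → ρ < 1 →
      ∫ t in Ioc (0:ℝ) (2 * π), ‖g (ρ * circleMap 0 1 t)‖ ≤ C := by
  obtain ⟨hd, C, hC⟩ := hg
  refine ⟨(∫ t in Ioc (0:ℝ) (2 * π), (1:ℝ)) + 2 * π * C, fun ρ h0 h1 => ?_⟩
  have hc := (continuous_dilate_circleMap hd h0 h1).norm
  have hcp : Continuous fun t : ℝ => ‖g (ρ * circleMap 0 1 t)‖ ^ p :=
    hc.rpow_const fun t => Or.inr (by linarith)
  have h2 : ∫ t in Ioc (0:ℝ) (2 * π), ‖g (ρ * circleMap 0 1 t)‖ ^ p ≤ 2 * π * C := by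
    have := hC ρ h0 h1
    rw [hardyIntegral, intervalIntegral.integral_of_le (by positivity), one_div,
      inv_mul_le_iff₀ (by positivity)] at this
    simpa [circleMap] using this
  calc ∫ t in Ioc (0:ℝ) (2 * π), ‖g (ρ * circleMap 0 1 t)‖
      ≤ ∫ t in Ioc (0:ℝ) (2 * π), (1 + ‖g (ρ * circleMap 0 1 t)‖ ^ p) := by
        refine integral_mono hc.integrableOn_Ioc (continuous_const.add hcp).integrableOn_Ioc
          fun t => ?_
        simp only
        have hx := norm_nonneg (g (ρ * circleMap 0 1 t))
        rcases le_total ‖g (ρ * circleMap 0 1 t)‖ 1 with h | h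
        · linarith [Real.rpow_nonneg hx p]
        · linarith [Real.self_le_rpow_of_one_le h hp]
    _ ≤ _ := by
        rw [integral_add continuous_const.integrableOn_Ioc hcp.integrableOn_Ioc]
        gcongr

/-- If `φ` is inner, `g ∈ H^p(𝔻)`, and `φ f = g` on the disk for some analytic `f`,
then `f` has radial limits almost everywhere on the circle. -/
theorem radial_limit_of_inner_mul_eq_hardy
    (p : ℝ) (hp : 1 ≤ p)
    (φ g f : ℂ → ℂ) (hφ : IsInner φ) (hg : MemHardy p g)
    (hf : DifferentiableOn ℂ f unitDisk)
    (hfg : ∀ z ∈ unitDisk, φ z * f z = g z) :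
    ∀ᵐ θ ∂(volume.restrict (Set.Ico (0:ℝ) (2 * π))),
      ∃ L : ℂ, HasRadialLimit f θ L := by
  obtain ⟨C, hC⟩ := hg.exists_integral_norm_le hp
  filter_upwards [hφ.2.2, ae_hasRadialLimit_of_integral_norm_bounded hg.1 hC]
    with θ ⟨L, hL, hφL⟩ ⟨M, hM⟩
  have hL0 : L ≠ 0 := fun h => by simp [h] at hL
  refine ⟨M / L, (hM.div hφL hL0).congr' ?_⟩
  filter_upwards [eventually_mem_Ico, hφL.eventually_ne hL0] with r ⟨h0, h1⟩ hne
  have hz := smul_mem_unitDisk h0 h1 (z := Complex.exp (θ * Complex.I))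
    (Complex.norm_exp_ofReal_mul_I θ).le
  simp only [Pi.div_apply]
  rw [← hfg _ hz]
  exact mul_div_cancel_left₀ _ hne
end
end
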